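/- Let u : D_r ⊂ ℝ² → ℝᵐ be smooth on the disk of radius r with |Du| ≤ α, and let Σ = Graph(u) with second fundamental form A. Then for every k ≥ 0 there is C = C(r, α, k) such that ‖A‖_{H^{k,2}} ≤ C Σ_{s=1}^{k+1} ‖D²u‖^s_{W^{k,2}}, where ‖A‖_{H^{k,2}}² = Σ_{l≤k} ∫_Σ |∇^l A|²_g dμ and ‖D²u‖_{W^{k,2}} is the usual Sobolev norm of the Hessian on D_r. -/

import Mathlib

noncomputable section Stmt17

namespace Stmt17

variable {m : ℕ}

/-- Partial derivative of a map into the ambient ℝ^{2+m} ≅ ℝ² ⊕ ℝᵐ. -/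
def pd (f : (Fin 2 → ℝ) → (Fin 2 ⊕ Fin m → ℝ)) (i : Fin 2) :
    (Fin 2 → ℝ) → (Fin 2 ⊕ Fin m → ℝ) :=
  fun x => fderiv ℝ f x (Pi.single i 1)

def dotA (v w : Fin 2 ⊕ Fin m → ℝ) : ℝ := ∑ A, v A * w A

/-- The graph immersion F(x) = (x, u(x)). -/
def gr (u : (Fin 2 → ℝ) → (Fin m → ℝ)) : (Fin 2 → ℝ) → (Fin 2 ⊕ Fin m → ℝ) :=
  fun x => Sum.elim x (u x)

def gmet (F : (Fin 2 → ℝ) → (Fin 2 ⊕ Fin m → ℝ)) (x : Fin 2 → ℝ) :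
    Matrix (Fin 2) (Fin 2) ℝ :=
  Matrix.of fun i j => dotA (pd F i x) (pd F j x)

def nproj (F : (Fin 2 → ℝ) → (Fin 2 ⊕ Fin m → ℝ)) (x : Fin 2 → ℝ)
    (v : Fin 2 ⊕ Fin m → ℝ) : Fin 2 ⊕ Fin m → ℝ :=
  v - ∑ k, ∑ l, ((gmet F x)⁻¹ k l * dotA v (pd F l x)) • pd F k x

def chr (F : (Fin 2 → ℝ) → (Fin 2 ⊕ Fin m → ℝ)) (i j k : Fin 2)
    (x : Fin 2 → ℝ) : ℝ :=
  ∑ l, (gmet F x)⁻¹ k l * dotA (pd (pd F i) j x) (pd F l x)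

def sffT (F : (Fin 2 → ℝ) → (Fin 2 ⊕ Fin m → ℝ)) :
    (Fin 2 → ℝ) → (Fin 2 → Fin 2) → (Fin 2 ⊕ Fin m → ℝ) :=
  fun x I => nproj F x (pd (pd F (I 0)) (I 1) x)

def covDer (F : (Fin 2 → ℝ) → (Fin 2 ⊕ Fin m → ℝ)) (l : ℕ)
    (T : (Fin 2 → ℝ) → (Fin l → Fin 2) → (Fin 2 ⊕ Fin m → ℝ)) :
    (Fin 2 → ℝ) → (Fin (l+1) → Fin 2) → (Fin 2 ⊕ Fin m → ℝ) :=
  fun x I =>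
    nproj F x (pd (fun y => T y (Fin.tail I)) (I 0) x)
      - ∑ a : Fin l, ∑ mm : Fin 2,
          chr F (I 0) (Fin.tail I a) mm x • T x (Function.update (Fin.tail I) a mm)

/-- Iterated covariant derivative ∇ˡA. -/
def covIter (F : (Fin 2 → ℝ) → (Fin 2 ⊕ Fin m → ℝ)) :
    (l : ℕ) → (Fin 2 → ℝ) → (Fin (l+2) → Fin 2) → (Fin 2 ⊕ Fin m → ℝ)
  | 0 => sffT F
  | (l+1) => covDer F (l+2) (covIter F l)

/-- Pointwise squared g-norm `|∇ˡA|²_g`. -/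
def nCov2 (F : (Fin 2 → ℝ) → (Fin 2 ⊕ Fin m → ℝ)) (l : ℕ) (x : Fin 2 → ℝ) : ℝ :=
  ∑ I : Fin (l+2) → Fin 2, ∑ J : Fin (l+2) → Fin 2,
    (∏ s, (gmet F x)⁻¹ (I s) (J s)) * dotA (covIter F l x I) (covIter F l x J)

/-- Iterated partial derivatives Dˡu. -/
def pdIter (u : (Fin 2 → ℝ) → (Fin m → ℝ)) :
    (l : ℕ) → (Fin 2 → ℝ) → (Fin l → Fin 2) → (Fin m → ℝ)
  | 0 => fun x _ => u x
  | (l+1) => fun x I =>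
      fderiv ℝ (fun y => pdIter u l y (Fin.tail I)) x (Pi.single (I 0) 1)

/-- The open disk of radius r in ℝ². -/
def Dr (r : ℝ) : Set (Fin 2 → ℝ) := {x | x 0 ^ 2 + x 1 ^ 2 < r ^ 2}

/-- The Sobolev norm `‖A‖_{H^{k,2}}` of the second fundamental form of the graph. -/
def HAnorm (r : ℝ) (k : ℕ) (u : (Fin 2 → ℝ) → (Fin m → ℝ)) : ℝ :=
  Real.sqrt (∑ l ∈ Finset.range (k+1),
    ∫ x in Dr r, nCov2 (gr u) l x * Real.sqrt (gmet (gr u) x).det)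

/-- The usual Sobolev norm `‖D²u‖_{W^{k,2}}` of the Hessian on the disk. -/
def Wnorm (r : ℝ) (k : ℕ) (u : (Fin 2 → ℝ) → (Fin m → ℝ)) : ℝ :=
  Real.sqrt (∑ l ∈ Finset.range (k+1),
    ∫ x in Dr r, ∑ I : Fin (l+2) → Fin 2, ∑ a, (pdIter u (l+2) x I a) ^ 2)

end Stmt17

namespace Stmt17
open MeasureTheory Set

/-- scalar partial derivative -/
def dd (i : Fin 2) (f : (Fin 2 → ℝ) → ℝ) (x : Fin 2 → ℝ) : ℝ :=
  fderiv ℝ f x (Pi.single i 1)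

/-- size of the gradient -/
def Gd (f : (Fin 2 → ℝ) → ℝ) (x : Fin 2 → ℝ) : ℝ := |dd 0 f x| + |dd 1 f x|

lemma Gd_nonneg (f : (Fin 2 → ℝ) → ℝ) (x : Fin 2 → ℝ) : 0 ≤ Gd f x := by
  unfold Gd; positivity

lemma isOpen_Dr (r : ℝ) : IsOpen (Dr r) := by
  unfold Dr
  apply isOpen_lt <;> fun_prop

lemma measSet_Dr (r : ℝ) : MeasurableSet (Dr r) := (isOpen_Dr r).measurableSet

lemma vol_Dr_lt (r : ℝ) : volume (Dr r) < ⊤ := by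
  have : Dr r ⊆ Metric.closedBall 0 |r| := by
    intro x hx
    replace hx : x 0 ^ 2 + x 1 ^ 2 < r ^ 2 := hx
    rw [mem_closedBall_zero_iff, pi_norm_le_iff_of_nonneg (abs_nonneg r)]
    intro i
    rw [Real.norm_eq_abs]
    apply sq_le_sq.1
    fin_cases i <;> simp <;> nlinarith [sq_nonneg (x 0), sq_nonneg (x 1)]
  exact (measure_mono this).trans_lt (measure_closedBall_lt_top)

/-- two-direction Tonelli inequality -/
lemma grid (v w : Fin 2 → ℝ) (hvw : v 0 * w 1 - w 0 * v 1 ≠ 0) :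
    ∃ C : ENNReal, C < ⊤ ∧ ∀ h : (Fin 2 → ℝ) → ENNReal, Measurable h →
      ∫⁻ p, (∫⁻ t : ℝ, h (p + t • v)) * (∫⁻ t : ℝ, h (p + t • w)) ≤ C * (∫⁻ p, h p) ^ 2 := by
  set M : Matrix (Fin 2) (Fin 2) ℝ := !![v 0, w 0; v 1, w 1] with hM
  have hdet : M.det ≠ 0 := by rw [hM, Matrix.det_fin_two_of]; exact hvw
  set L := Matrix.toLin' M
  have hmap := Real.map_matrix_volume_pi_eq_smul_volume_pi hdet
  set c := ENNReal.ofReal |M.det⁻¹| with hc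
  have hc0 : c ≠ 0 := by
    rw [hc]; simp only [ne_eq, ENNReal.ofReal_eq_zero, not_le]; positivity
  have hcT : c ≠ ⊤ := ENNReal.ofReal_ne_top
  have hLm : Measurable L := (LinearMap.continuous_of_finiteDimensional L).measurable
  have hL : ∀ a b : ℝ, L ![a, b] = a • v + b • w := by
    intro a b
    ext i; fin_cases i <;> simp [L, hM, Matrix.mulVec, dotProduct, Fin.sum_univ_two] <;> ring
  have key : ∀ F : (Fin 2 → ℝ) → ENNReal, Measurable F →
      c * ∫⁻ p, F p = ∫⁻ q : ℝ × ℝ, F (q.1 • v + q.2 • w) := by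
    intro F hF
    have h1 : c * ∫⁻ p, F p = ∫⁻ q, F (L q) := by
      rw [← lintegral_map hF hLm, hmap, lintegral_smul_measure, smul_eq_mul]
    rw [h1]
    have h2 := (volume_preserving_finTwoArrow ℝ).symm
    refine Eq.trans (h2.lintegral_comp (hF.comp hLm)).symm ?_
    apply lintegral_congr
    intro q
    exact congrArg F (hL q.1 q.2)
  refine ⟨c, ENNReal.ofReal_lt_top, ?_⟩
  intro h hh
  have hA : ∀ v : Fin 2 → ℝ, Measurable (fun p : Fin 2 → ℝ => ∫⁻ t : ℝ, h (p + t • v)) := by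
    intro v
    apply Measurable.lintegral_prod_right' (f := fun z : (Fin 2 → ℝ) × ℝ => h (z.1 + z.2 • v))
    exact hh.comp (by fun_prop)
  have h3 := key _ ((hA v).mul (hA w))
  have h4 := key h hh
  have h5 : ∫⁻ q : ℝ × ℝ, (∫⁻ t : ℝ, h (q.1 • v + q.2 • w + t • v)) *
      (∫⁻ t : ℝ, h (q.1 • v + q.2 • w + t • w)) = (∫⁻ q : ℝ × ℝ, h (q.1 • v + q.2 • w)) ^ 2 := by
    have e1 : ∀ q : ℝ × ℝ, (∫⁻ t : ℝ, h (q.1 • v + q.2 • w + t • v))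
        = ∫⁻ t : ℝ, h (t • v + q.2 • w) := by
      intro q
      rw [← lintegral_add_left_eq_self (fun t : ℝ => h (t • v + q.2 • w)) q.1]
      apply lintegral_congr; intro t; congr 1; module
    have e2 : ∀ q : ℝ × ℝ, (∫⁻ t : ℝ, h (q.1 • v + q.2 • w + t • w))
        = ∫⁻ t : ℝ, h (q.1 • v + t • w) := by
      intro q
      rw [← lintegral_add_left_eq_self (fun t : ℝ => h (q.1 • v + t • w)) q.2]
      apply lintegral_congr; intro t; congr 1; module
    simp_rw [e1, e2]
    have m0 : Measurable (fun z : ℝ × ℝ => h (z.1 • v + z.2 • w)) := hh.comp (by fun_prop)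
    have m1 : Measurable (fun a : ℝ => ∫⁻ t : ℝ, h (a • v + t • w)) :=
      Measurable.lintegral_prod_right' m0
    have m2 : Measurable (fun a : ℝ => ∫⁻ t : ℝ, h (t • v + a • w)) :=
      Measurable.lintegral_prod_left' m0
    have := lintegral_prod_mul (μ := (volume : Measure ℝ)) (ν := (volume : Measure ℝ))
      m1.aemeasurable m2.aemeasurable
    calc _ = ∫⁻ z : ℝ × ℝ, (∫⁻ t : ℝ, h (z.1 • v + t • w)) * (∫⁻ t : ℝ, h (t • v + z.2 • w)) := by
            apply lintegral_congr; intro z; rw [mul_comm]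
      _ = _ := this
      _ = _ := by
        rw [sq]
        congr 1
        · rw [Measure.volume_eq_prod, lintegral_prod _ m0.aemeasurable]
        · rw [Measure.volume_eq_prod, lintegral_prod_symm _ m0.aemeasurable]
  simp only [Pi.mul_apply] at h3
  rw [h5, ← h4] at h3
  have h6 : c * ∫⁻ p, (∫⁻ t : ℝ, h (p + t • v)) * (∫⁻ t : ℝ, h (p + t • w))
      = c * (c * (∫⁻ p, h p) ^ 2) := by
    rw [h3]; ring
  exact ((ENNReal.mul_right_inj hc0 hcT).1 h6).le

lemma dir_le (f : (Fin 2 → ℝ) → ℝ) (y v : Fin 2 → ℝ) (hv0 : |v 0| ≤ 1) (hv1 : |v 1| ≤ 1) :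
    |fderiv ℝ f y v| ≤ Gd f y := by
  have : v = v 0 • (Pi.single 0 1 : Fin 2 → ℝ) + v 1 • (Pi.single 1 1 : Fin 2 → ℝ) := by
    ext i; fin_cases i <;> simp
  have e : fderiv ℝ f y v = v 0 * dd 0 f y + v 1 * dd 1 f y := by
    conv_lhs => rw [this]
    simp [dd]
  rw [e]
  unfold Gd
  refine (abs_add_le _ _).trans ?_
  rw [abs_mul, abs_mul]
  nlinarith [abs_nonneg (dd 0 f y), abs_nonneg (dd 1 f y)]

/-- FTC along a segment, two versions -/
lemma ftc_slice {D : Set (Fin 2 → ℝ)} (hD : IsOpen D) (f : (Fin 2 → ℝ) → ℝ)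
    (hf : ContDiffOn ℝ 1 f D) (p v : Fin 2 → ℝ) (hv0 : |v 0| ≤ 1) (hv1 : |v 1| ≤ 1)
    (c : ℝ) (hc : 0 < c) (hp : ∀ t ∈ Icc 0 c, p + t • v ∈ D) :
    (ENNReal.ofReal |f p| ≤ ∫⁻ t : ℝ,
      D.indicator (fun y => ENNReal.ofReal (|f y| / c + Gd f y)) (p + t • v)) ∧
    (ENNReal.ofReal |f p| ≤ ENNReal.ofReal |f (p + c • v)| + ∫⁻ t in Icc 0 c,
      D.indicator (fun y => ENNReal.ofReal (Gd f y)) (p + t • v)) := by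
  have hline : ∀ t, HasDerivAt (fun t : ℝ => p + t • v) v t := by
    intro t
    simpa using ((hasDerivAt_id t).smul_const v).const_add p
  have hcl : Continuous (fun t : ℝ => p + t • v) := by fun_prop
  have hmt : MapsTo (fun t : ℝ => p + t • v) (Icc 0 c) D := hp
  have hfd : ∀ t ∈ Icc 0 c, HasDerivAt (fun t : ℝ => f (p + t • v)) (fderiv ℝ f (p + t • v) v) t := by
    intro t ht
    have h1 : DifferentiableAt ℝ f (p + t • v) :=
      (hf.differentiableOn (by norm_num)).differentiableAt (hD.mem_nhds (hp t ht))
    exact h1.hasFDerivAt.comp_hasDerivAt t (hline t)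
  have hc1 : ContinuousOn (fun t : ℝ => f (p + t • v)) (Icc 0 c) :=
    hf.continuousOn.comp hcl.continuousOn hmt
  have hc2 : ContinuousOn (fun t : ℝ => fderiv ℝ f (p + t • v) v) (Icc 0 c) := by
    have := (hf.continuousOn_fderiv_of_isOpen hD le_rfl)
    exact (this.comp hcl.continuousOn hmt).clm_apply continuousOn_const
  have hcG : ContinuousOn (fun t : ℝ => Gd f (p + t • v)) (Icc 0 c) := by
    have := (hf.continuousOn_fderiv_of_isOpen hD le_rfl)
    have h := (this.comp hcl.continuousOn hmt)
    unfold Gd dd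
    exact ((h.clm_apply continuousOn_const).abs).add ((h.clm_apply continuousOn_const).abs)
  have conv : ∀ k : (Fin 2 → ℝ) → ℝ, (∀ y, 0 ≤ k y) →
      ContinuousOn (fun t : ℝ => k (p + t • v)) (Icc 0 c) →
      ENNReal.ofReal (∫ t in (0:ℝ)..c, k (p + t • v)) =
      ∫⁻ t in Icc 0 c, D.indicator (fun y => ENNReal.ofReal (k y)) (p + t • v) := by
    intro k hk hkc
    rw [intervalIntegral.integral_of_le hc.le, ← integral_Icc_eq_integral_Ioc,
      ofReal_integral_eq_lintegral_ofReal (hkc.integrableOn_Icc)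
        (Filter.Eventually.of_forall fun t => hk _)]
    apply setLIntegral_congr_fun measurableSet_Icc
    intro t ht
    simp only
    rw [indicator_of_mem (hp t ht)]
  have hu : uIcc 0 c = Icc 0 c := uIcc_of_le hc.le
  constructor
  · have key : ∫ t in (0:ℝ)..c, ((c - t) * fderiv ℝ f (p + t • v) v - f (p + t • v)) = - (c * f p) := by
      have := intervalIntegral.integral_eq_sub_of_hasDerivAt (a := 0) (b := c)
        (f := fun t => (c - t) * f (p + t • v))
        (f' := fun t => (c - t) * fderiv ℝ f (p + t • v) v - f (p + t • v)) ?_ ?_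
      · rw [this]; simp
      · intro t ht
        rw [hu] at ht
        have := ((hasDerivAt_id t).const_sub c).mul (hfd t ht)
        refine this.congr_deriv ?_
        simp only [id_eq]; ring
      · apply ContinuousOn.intervalIntegrable
        rw [hu]
        exact ((by fun_prop : Continuous fun t : ℝ => c - t).continuousOn.mul hc2).sub hc1
    have hk : ContinuousOn (fun t : ℝ => |f (p + t • v)| / c + Gd f (p + t • v)) (Icc 0 c) :=
      (hc1.abs.div_const c).add hcG
    have h2 : |f p| ≤ ∫ t in (0:ℝ)..c, (|f (p + t • v)| / c + Gd f (p + t • v)) := by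
      have h3 : |∫ t in (0:ℝ)..c, ((c - t) * fderiv ℝ f (p + t • v) v - f (p + t • v))| ≤
          ∫ t in (0:ℝ)..c, c * (|f (p + t • v)| / c + Gd f (p + t • v)) := by
        apply intervalIntegral.abs_integral_le_integral_abs hc.le |>.trans
        apply intervalIntegral.integral_mono_on hc.le
        · apply ContinuousOn.intervalIntegrable
          rw [hu]
          exact (((by fun_prop : Continuous fun t : ℝ => c - t).continuousOn.mul hc2).sub hc1).abs
        · apply ContinuousOn.intervalIntegrable
          rw [hu]
          exact continuousOn_const.mul hk
        · intro t ht
          refine (abs_sub _ _).trans ?_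
          rw [abs_mul, mul_add, mul_div_cancel₀ _ hc.ne', abs_of_nonneg (by linarith [ht.2] : 0 ≤ c - t)]
          have := dir_le f (p + t • v) v hv0 hv1
          have h9 := abs_nonneg (fderiv ℝ f (p + t • v) v)
          nlinarith [ht.1, ht.2]
      rw [key, intervalIntegral.integral_const_mul, abs_neg, abs_mul, abs_of_pos hc] at h3
      exact le_of_mul_le_mul_left h3 hc
    calc _ ≤ ENNReal.ofReal (∫ t in (0:ℝ)..c, (|f (p + t • v)| / c + Gd f (p + t • v))) :=
          ENNReal.ofReal_le_ofReal h2
      _ = _ := conv (fun y => |f y| / c + Gd f y)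
          (fun y => add_nonneg (by positivity) (Gd_nonneg _ _)) hk
      _ ≤ _ := setLIntegral_le_lintegral _ _
  · have key : ∫ t in (0:ℝ)..c, (fderiv ℝ f (p + t • v) v) = f (p + c • v) - f p := by
      have := intervalIntegral.integral_eq_sub_of_hasDerivAt (a := 0) (b := c)
        (f := fun t => f (p + t • v))
        (f' := fun t => fderiv ℝ f (p + t • v) v) ?_ ?_
      · rw [this]; simp
      · intro t ht
        rw [hu] at ht
        exact hfd t ht
      · apply ContinuousOn.intervalIntegrable
        rw [hu]
        exact hc2
    have h3 : |∫ t in (0:ℝ)..c, (fderiv ℝ f (p + t • v) v)| ≤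
          ∫ t in (0:ℝ)..c, (Gd f (p + t • v)) := by
        apply intervalIntegral.abs_integral_le_integral_abs hc.le |>.trans
        apply intervalIntegral.integral_mono_on hc.le
        · apply ContinuousOn.intervalIntegrable
          rw [hu]
          exact hc2.abs
        · apply ContinuousOn.intervalIntegrable
          rw [hu]
          exact hcG
        · intro t ht
          exact dir_le f (p + t • v) v hv0 hv1
    rw [key] at h3
    have h4 : |f p| ≤ |f (p + c • v)| + ∫ t in (0:ℝ)..c, (Gd f (p + t • v)) := by
      have := abs_sub_abs_le_abs_sub (f p) (f (p + c • v))
      rw [abs_sub_comm] at h3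
      linarith
    rw [← conv (fun y => Gd f y) (fun y => Gd_nonneg _ _) hcG]
    refine (ENNReal.ofReal_le_ofReal h4).trans ENNReal.ofReal_add_le

/-- The sector in direction `q` (one of `±e₀`, `±e₁`). -/
lemma sector_cases (p : Fin 2 → ℝ) :
    |p 1| ≤ p 0 ∨ |p 1| ≤ - p 0 ∨ |p 0| ≤ p 1 ∨ |p 0| ≤ - p 1 := by
  rcases abs_cases (p 0) with h | h <;> rcases abs_cases (p 1) with h' | h' <;>
    rcases le_total |p 0| |p 1| with h'' | h''
  all_goals first
    | (left; linarith)
    | (right; left; linarith)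
    | (right; right; left; linarith)
    | (right; right; right; linarith)

/-- geometric fact: moving inwards -/
lemma inward (r x y v w t : ℝ) (hr : 0 < r) (hab : |y| ≤ x) (hp : x ^ 2 + y ^ 2 < r ^ 2)
    (hv : v = -1) (hw : w = 1 / 2 ∨ w = - (1 / 2)) (ht : t ∈ Icc 0 (r / 4)) :
    (x + t * v) ^ 2 + (y + t * w) ^ 2 < r ^ 2 := by
  have hx := abs_le.1 hab
  obtain ⟨ht0, ht1⟩ := ht
  have hx0 : 0 ≤ x := (abs_nonneg y).trans hab
  subst hv
  have h1 : (x + t * (-1)) ^ 2 + (y + t * w) ^ 2 ≤ x ^ 2 + y ^ 2 - t * x + 5 / 4 * t ^ 2 := by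
    rcases hw with rfl | rfl <;> nlinarith
  have hy2 : y ^ 2 ≤ x ^ 2 := by nlinarith
  rcases le_or_gt (5 / 4 * t) x with h | h
  · nlinarith
  · nlinarith

lemma inward' (r x y v w : ℝ) (hr : 0 < r) (hab : |y| ≤ x) (hp : x ^ 2 + y ^ 2 < r ^ 2)
    (hv : v = -1) (hw : w = 1 / 2 ∨ w = - (1 / 2)) :
    (x + r / 4 * v) ^ 2 + (y + r / 4 * w) ^ 2 ≤ 999 / 1000 * r ^ 2 := by
  have hx := abs_le.1 hab
  have hx0 : 0 ≤ x := (abs_nonneg y).trans hab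
  subst hv
  have h1 : (x + r / 4 * (-1)) ^ 2 + (y + r / 4 * w) ^ 2 ≤
      x ^ 2 + y ^ 2 - r / 4 * x + 5 / 64 * r ^ 2 := by
    rcases hw with rfl | rfl <;> nlinarith
  have hy2 : y ^ 2 ≤ x ^ 2 := by nlinarith
  rcases le_or_gt (35 / 100 * r) x with h | h
  · nlinarith
  · nlinarith

/-- a sector with two good inward directions -/
def Good (r : ℝ) (S : Set (Fin 2 → ℝ)) (v w : Fin 2 → ℝ) : Prop :=
  MeasurableSet S ∧ (|v 0| ≤ 1 ∧ |v 1| ≤ 1 ∧ |w 0| ≤ 1 ∧ |w 1| ≤ 1) ∧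
  v 0 * w 1 - w 0 * v 1 ≠ 0 ∧ ∀ p ∈ Dr r ∩ S,
    (∀ t ∈ Icc 0 (r / 4), p + t • v ∈ Dr r ∧ p + t • w ∈ Dr r) ∧
    p + (r / 4) • v ∈ {x : Fin 2 → ℝ | x 0 ^ 2 + x 1 ^ 2 ≤ 999 / 1000 * r ^ 2}

lemma sectors (r : ℝ) (hr : 0 < r) : ∃ (S : Fin 4 → Set (Fin 2 → ℝ)) (v w : Fin 4 → Fin 2 → ℝ),
    (∀ i, Good r (S i) (v i) (w i)) ∧ Dr r ⊆ ⋃ i, S i := by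
  refine ⟨![{p | |p 1| ≤ p 0}, {p | |p 1| ≤ - p 0}, {p | |p 0| ≤ p 1}, {p | |p 0| ≤ - p 1}],
    ![![-1, 1/2], ![1, 1/2], ![1/2, -1], ![1/2, 1]],
    ![![-1, -(1/2)], ![1, -(1/2)], ![-(1/2), -1], ![-(1/2), 1]], ?_, ?_⟩
  · intro i
    refine ⟨?_, ?_, ?_, ?_⟩
    · fin_cases i
      all_goals
        apply IsClosed.measurableSet
        apply isClosed_le <;> fun_prop
    · fin_cases i <;> norm_num [abs_le]
    · fin_cases i <;> norm_num
    · rintro p ⟨hp, hpS⟩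
      replace hp : p 0 ^ 2 + p 1 ^ 2 < r ^ 2 := hp
      have hp' : p 1 ^ 2 + p 0 ^ 2 < r ^ 2 := by linarith
      refine ⟨fun t ht => ⟨?_, ?_⟩, ?_⟩
      · show (_ : ℝ) < _
        fin_cases i
        · replace hpS : |p 1| ≤ p 0 := hpS
          have := inward r (p 0) (p 1) (-1) (1/2) t hr hpS hp rfl (by simp) ht
          simp; linarith
        · replace hpS : |p 1| ≤ - p 0 := hpS
          have := inward r (-p 0) (p 1) (-1) (1/2) t hr hpS (by linarith) rfl (by simp) ht
          simp; nlinarith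
        · replace hpS : |p 0| ≤ p 1 := hpS
          have := inward r (p 1) (p 0) (-1) (1/2) t hr hpS hp' rfl (by simp) ht
          simp; linarith
        · replace hpS : |p 0| ≤ - p 1 := hpS
          have := inward r (-p 1) (p 0) (-1) (1/2) t hr hpS (by linarith) rfl (by simp) ht
          simp; nlinarith
      · show (_ : ℝ) < _
        fin_cases i
        · replace hpS : |p 1| ≤ p 0 := hpS
          have := inward r (p 0) (p 1) (-1) (-(1/2)) t hr hpS hp rfl (by simp) ht
          simp; linarith
        · replace hpS : |p 1| ≤ - p 0 := hpS
          have := inward r (-p 0) (p 1) (-1) (-(1/2)) t hr hpS (by linarith) rfl (by simp) ht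
          simp; nlinarith
        · replace hpS : |p 0| ≤ p 1 := hpS
          have := inward r (p 1) (p 0) (-1) (-(1/2)) t hr hpS hp' rfl (by simp) ht
          simp; linarith
        · replace hpS : |p 0| ≤ - p 1 := hpS
          have := inward r (-p 1) (p 0) (-1) (-(1/2)) t hr hpS (by linarith) rfl (by simp) ht
          simp; nlinarith
      · show (_ : ℝ) ≤ _
        fin_cases i
        · replace hpS : |p 1| ≤ p 0 := hpS
          have := inward' r (p 0) (p 1) (-1) (1/2) hr hpS hp rfl (by simp)
          simp; linarith
        · replace hpS : |p 1| ≤ - p 0 := hpS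
          have := inward' r (-p 0) (p 1) (-1) (1/2) hr hpS (by linarith) rfl (by simp)
          simp; nlinarith
        · replace hpS : |p 0| ≤ p 1 := hpS
          have := inward' r (p 1) (p 0) (-1) (1/2) hr hpS hp' rfl (by simp)
          simp; linarith
        · replace hpS : |p 0| ≤ - p 1 := hpS
          have := inward' r (-p 1) (p 0) (-1) (1/2) hr hpS (by linarith) rfl (by simp)
          simp; nlinarith
  · intro p hp
    rw [mem_iUnion]
    rcases sector_cases p with h | h | h | h
    · exact ⟨0, h⟩
    · exact ⟨1, h⟩
    · exact ⟨2, h⟩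
    · exact ⟨3, h⟩
end Stmt17

namespace Stmt17
open MeasureTheory Set

lemma Gd_contOn {D : Set (Fin 2 → ℝ)} (hD : IsOpen D) {f : (Fin 2 → ℝ) → ℝ}
    (hf : ContDiffOn ℝ 1 f D) : ContinuousOn (Gd f) D := by
  have h := (hf.continuousOn_fderiv_of_isOpen hD le_rfl)
  unfold Gd dd
  exact ((h.clm_apply continuousOn_const).abs).add ((h.clm_apply continuousOn_const).abs)

lemma meas_ind {D : Set (Fin 2 → ℝ)} (hD : IsOpen D) {k : (Fin 2 → ℝ) → ℝ}
    (hk : ContinuousOn k D) : Measurable (D.indicator (fun y => ENNReal.ofReal (k y))) := by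
  classical
  rw [← Set.piecewise_eq_indicator]
  apply ContinuousOn.measurable_piecewise _ continuousOn_const hD.measurableSet
  exact ENNReal.continuous_ofReal.comp_continuousOn hk

lemma sob1 (r : ℝ) (hr : 0 < r) : ∃ C : ENNReal, C < ⊤ ∧ ∀ f : (Fin 2 → ℝ) → ℝ,
    ContDiffOn ℝ 1 f (Dr r) →
    ∫⁻ x in Dr r, ENNReal.ofReal (|f x| ^ 2) ≤
      C * (∫⁻ x in Dr r, ENNReal.ofReal (|f x| + Gd f x)) ^ 2 := by
  obtain ⟨S, v, w, hG, hcov⟩ := sectors r hr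
  have hgr := fun i => grid (v i) (w i) (hG i).2.2.1
  choose C hC hgrid using hgr
  refine ⟨∑ i, C i * ENNReal.ofReal (1 / (r/4) + 1) ^ 2, ?_, ?_⟩
  · rw [ENNReal.sum_lt_top]
    intro i _
    exact ENNReal.mul_lt_top (hC i) (ENNReal.pow_lt_top ENNReal.ofReal_lt_top)
  intro f hf
  have hr4 : 0 < r / 4 := by positivity
  set h := (Dr r).indicator (fun y => ENNReal.ofReal (|f y| / (r/4) + Gd f y)) with hh
  have hGc := Gd_contOn (isOpen_Dr r) hf
  have hm : Measurable h := meas_ind (isOpen_Dr r) ((hf.continuousOn.abs.div_const _).add hGc)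
  have hint : ∫⁻ p, h p ≤ ENNReal.ofReal (1 / (r/4) + 1) *
      ∫⁻ x in Dr r, ENNReal.ofReal (|f x| + Gd f x) := by
    rw [hh, lintegral_indicator (measSet_Dr r), ← lintegral_const_mul' _ _ ENNReal.ofReal_ne_top]
    apply lintegral_mono
    intro x
    simp only
    rw [← ENNReal.ofReal_mul (by positivity)]
    apply ENNReal.ofReal_le_ofReal
    have h1 := Gd_nonneg f x
    have h2 := abs_nonneg (f x)
    have h3 : 0 < 1 / (r/4) := by positivity
    rw [div_eq_mul_one_div]
    nlinarith [mul_nonneg h3.le h1]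
  have hpiece : ∀ i, ∫⁻ x in Dr r ∩ S i, ENNReal.ofReal (|f x| ^ 2) ≤
      C i * ENNReal.ofReal (1 / (r/4) + 1) ^ 2 *
        (∫⁻ x in Dr r, ENNReal.ofReal (|f x| + Gd f x)) ^ 2 := by
    intro i
    obtain ⟨hS, ⟨hv0, hv1, hw0, hw1⟩, -, hin⟩ := hG i
    calc _ ≤ ∫⁻ x in Dr r ∩ S i, (∫⁻ t : ℝ, h (x + t • v i)) * (∫⁻ t : ℝ, h (x + t • w i)) := by
          apply setLIntegral_mono' ((measSet_Dr r).inter hS)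
          intro x hx
          rw [ENNReal.ofReal_pow (abs_nonneg _), sq]
          apply mul_le_mul'
          · exact (ftc_slice (isOpen_Dr r) f hf x (v i) hv0 hv1 (r/4) hr4
              (fun t ht => ((hin x hx).1 t ht).1)).1
          · exact (ftc_slice (isOpen_Dr r) f hf x (w i) hw0 hw1 (r/4) hr4
              (fun t ht => ((hin x hx).1 t ht).2)).1
      _ ≤ ∫⁻ x, (∫⁻ t : ℝ, h (x + t • v i)) * (∫⁻ t : ℝ, h (x + t • w i)) :=
          setLIntegral_le_lintegral _ _
      _ ≤ C i * (∫⁻ p, h p) ^ 2 := hgrid i h hm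
      _ ≤ C i * (ENNReal.ofReal (1 / (r/4) + 1) *
            ∫⁻ x in Dr r, ENNReal.ofReal (|f x| + Gd f x)) ^ 2 := by gcongr
      _ = _ := by ring
  calc _ ≤ ∫⁻ x in ⋃ i, (Dr r ∩ S i), ENNReal.ofReal (|f x| ^ 2) := by
        apply lintegral_mono_set
        rw [← inter_iUnion]
        exact subset_inter le_rfl hcov
    _ ≤ ∑' i, ∫⁻ x in (Dr r ∩ S i), ENNReal.ofReal (|f x| ^ 2) := lintegral_iUnion_le _ _
    _ = ∑ i, ∫⁻ x in (Dr r ∩ S i), ENNReal.ofReal (|f x| ^ 2) := tsum_fintype _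
    _ ≤ _ := Finset.sum_le_sum (fun i _ => hpiece i)
    _ = _ := by rw [Finset.sum_mul]

lemma sob2 (r : ℝ) (hr : 0 < r) (f : (Fin 2 → ℝ) → ℝ) (hf : ContDiffOn ℝ 1 f (Dr r))
    (hG1 : ∫⁻ x in Dr r, ENNReal.ofReal (Gd f x) < ⊤) :
    ∫⁻ x in Dr r, ENNReal.ofReal |f x| < ⊤ := by
  obtain ⟨S, v, w, hG, hcov⟩ := sectors r hr
  have hr4 : 0 < r / 4 := by positivity
  set K := {x : Fin 2 → ℝ | x 0 ^ 2 + x 1 ^ 2 ≤ 999 / 1000 * r ^ 2} with hK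
  have hKD : K ⊆ Dr r := by
    intro x hx
    replace hx : x 0 ^ 2 + x 1 ^ 2 ≤ 999 / 1000 * r ^ 2 := hx
    show (_ : ℝ) < _
    nlinarith [pow_pos hr 2]
  have hKc : IsCompact K := by
    apply Metric.isCompact_of_isClosed_isBounded
    · apply isClosed_le <;> fun_prop
    · apply (Metric.isBounded_closedBall (x := (0 : Fin 2 → ℝ)) (r := r)).subset
      intro x hx
      have hx' : x 0 ^ 2 + x 1 ^ 2 < r ^ 2 := hKD hx
      rw [mem_closedBall_zero_iff, pi_norm_le_iff_of_nonneg hr.le]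
      intro i
      rw [Real.norm_eq_abs]
      apply abs_le_of_sq_le_sq _ hr.le
      fin_cases i <;> simp <;> nlinarith [sq_nonneg (x 0), sq_nonneg (x 1)]
  obtain ⟨M, hM⟩ := hKc.exists_bound_of_continuousOn (hf.continuousOn.mono hKD)
  have hGc := Gd_contOn (isOpen_Dr r) hf
  set h := (Dr r).indicator (fun y => ENNReal.ofReal (Gd f y)) with hh
  have hm : Measurable h := meas_ind (isOpen_Dr r) hGc
  have hint : ∫⁻ p, h p < ⊤ := by
    rwa [hh, lintegral_indicator (measSet_Dr r)]
  have hpiece : ∀ i, ∫⁻ x in Dr r ∩ S i, ENNReal.ofReal |f x| < ⊤ := by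
    intro i
    obtain ⟨hS, ⟨hv0, hv1, hw0, hw1⟩, -, hin⟩ := hG i
    calc _ ≤ ∫⁻ x in Dr r ∩ S i, (ENNReal.ofReal M + ∫⁻ t in Icc 0 (r/4), h (x + t • v i)) := by
          apply setLIntegral_mono' ((measSet_Dr r).inter hS)
          intro x hx
          refine (ftc_slice (isOpen_Dr r) f hf x (v i) hv0 hv1 (r/4) hr4
              (fun t ht => ((hin x hx).1 t ht).1)).2.trans ?_
          gcongr
          exact hM _ (hin x hx).2
      _ ≤ (∫⁻ x in Dr r ∩ S i, ENNReal.ofReal M) +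
            ∫⁻ x in Dr r ∩ S i, ∫⁻ t in Icc 0 (r/4), h (x + t • v i) := by
          rw [lintegral_add_left measurable_const]
      _ ≤ ENNReal.ofReal M * volume (Dr r) +
            ∫⁻ x, ∫⁻ t in Icc 0 (r/4), h (x + t • v i) := by
          gcongr
          · rw [setLIntegral_const]; gcongr; exact inter_subset_left
          · exact Measure.restrict_le_self
      _ = ENNReal.ofReal M * volume (Dr r) +
            ∫⁻ t in Icc 0 (r/4), ∫⁻ x, h (x + t • v i) := by
          congr 1
          apply lintegral_lintegral_swap
          apply Measurable.aemeasurable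
          exact hm.comp (by fun_prop : Measurable fun z : (Fin 2 → ℝ) × ℝ => z.1 + z.2 • v i)
      _ = ENNReal.ofReal M * volume (Dr r) + (∫⁻ x, h x) * volume (Icc 0 (r/4)) := by
          congr 1
          simp_rw [lintegral_add_right_eq_self]
          rw [setLIntegral_const]
      _ < ⊤ := by
          apply ENNReal.add_lt_top.2
          refine ⟨ENNReal.mul_lt_top ENNReal.ofReal_lt_top (vol_Dr_lt r),
            ENNReal.mul_lt_top hint ?_⟩
          simp
  calc _ ≤ ∫⁻ x in ⋃ i, (Dr r ∩ S i), ENNReal.ofReal |f x| := by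
        apply lintegral_mono_set
        rw [← inter_iUnion]
        exact subset_inter le_rfl hcov
    _ ≤ ∑' i, ∫⁻ x in (Dr r ∩ S i), ENNReal.ofReal |f x| := lintegral_iUnion_le _ _
    _ = ∑ i, ∫⁻ x in (Dr r ∩ S i), ENNReal.ofReal |f x| := tsum_fintype _
    _ < ⊤ := by
      rw [ENNReal.sum_lt_top]
      exact fun i _ => hpiece i

lemma aem {D : Set (Fin 2 → ℝ)} (hD : IsOpen D) {k : (Fin 2 → ℝ) → ℝ}
    (hk : ContinuousOn k D) : AEMeasurable (fun y => ENNReal.ofReal (k y)) (volume.restrict D) :=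
  (hk.aemeasurable hD.measurableSet).ennreal_ofReal

lemma cs_lint {μ : Measure (Fin 2 → ℝ)} {f g : (Fin 2 → ℝ) → ENNReal}
    (hf : AEMeasurable f μ) (hg : AEMeasurable g μ) :
    (∫⁻ x, f x * g x ∂μ) ^ 2 ≤ (∫⁻ x, f x ^ 2 ∂μ) * ∫⁻ x, g x ^ 2 ∂μ := by
  have h := ENNReal.lintegral_mul_le_Lp_mul_Lq μ Real.HolderConjugate.two_two hf hg
  simp only [Pi.mul_apply, ENNReal.rpow_two] at h
  calc _ ≤ ((∫⁻ x, f x ^ 2 ∂μ) ^ (1 / (2:ℝ)) * (∫⁻ x, g x ^ 2 ∂μ) ^ (1 / (2:ℝ))) ^ 2 := by gcongr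
    _ = _ := by
      rw [mul_pow, ← ENNReal.rpow_two, ← ENNReal.rpow_two, ← ENNReal.rpow_mul, ← ENNReal.rpow_mul]
      norm_num

lemma Gd_pow {f : (Fin 2 → ℝ) → ℝ} {x : Fin 2 → ℝ} (hf : DifferentiableAt ℝ f x) (n : ℕ) :
    Gd (fun y => f y ^ (n+1)) x = (n+1) * |f x| ^ n * Gd f x := by
  unfold Gd dd
  have : HasFDerivAt (fun y => f y ^ (n+1)) (((n+1 : ℕ) * f x ^ n) • fderiv ℝ f x) x := by
    simpa using hf.hasFDerivAt.pow (n+1)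
  rw [this.fderiv]
  simp only [_root_.smul_apply, smul_eq_mul, abs_mul, abs_pow]
  rw [Nat.abs_cast]
  push_cast
  ring

lemma sob3 (r : ℝ) (hr : 0 < r) (n : ℕ) : ∃ C : ENNReal, C < ⊤ ∧ ∀ f : (Fin 2 → ℝ) → ℝ,
    ContDiffOn ℝ 1 f (Dr r) →
    ∫⁻ x in Dr r, ENNReal.ofReal (|f x| ^ (2 * (n+1))) ≤
      C * (∫⁻ x in Dr r, ENNReal.ofReal (|f x| ^ 2 + Gd f x ^ 2)) ^ (n+1) := by
  obtain ⟨C0, hC0, h0⟩ := sob1 r hr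
  induction n with
  | zero =>
    refine ⟨1, ENNReal.one_lt_top, fun f hf => ?_⟩
    simp only [zero_add, mul_one, pow_one, one_mul]
    apply lintegral_mono
    intro x
    apply ENNReal.ofReal_le_ofReal
    nlinarith [sq_nonneg (Gd f x)]
  | succ n ih =>
    obtain ⟨C, hC, ih⟩ := ih
    refine ⟨C0 * (C * ENNReal.ofReal (2 * (n+2)^2)), ENNReal.mul_lt_top hC0 (ENNReal.mul_lt_top hC
      ENNReal.ofReal_lt_top), fun f hf => ?_⟩
    have hGc := Gd_contOn (isOpen_Dr r) hf
    have h1 := h0 (fun y => f y ^ (n+2)) (hf.pow (n+2))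
    have h2 : ∫⁻ x in Dr r, ENNReal.ofReal (|f x ^ (n+2)| + Gd (fun y => f y ^ (n+2)) x) =
        ∫⁻ x in Dr r, ENNReal.ofReal (|f x| ^ (n+1)) * ENNReal.ofReal (|f x| + (n+2) * Gd f x) := by
      apply setLIntegral_congr_fun (measSet_Dr r)
      intro x hx
      have hd : DifferentiableAt ℝ f x :=
        (hf.differentiableOn (by norm_num)).differentiableAt ((isOpen_Dr r).mem_nhds hx)
      simp only
      rw [Gd_pow hd (n+1), ← ENNReal.ofReal_mul (by positivity), abs_pow]
      congr 1
      push_cast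
      ring
    rw [h2] at h1
    have h3 := cs_lint (μ := volume.restrict (Dr r))
      (aem (isOpen_Dr r) (hf.continuousOn.abs.pow (n+1)))
      (aem (isOpen_Dr r) (hf.continuousOn.abs.add (continuousOn_const (c := (n:ℝ)+2) |>.mul hGc)))
    have h4 : ∫⁻ x in Dr r, ENNReal.ofReal (|f x| ^ (n+1)) ^ 2 =
        ∫⁻ x in Dr r, ENNReal.ofReal (|f x| ^ (2 * (n+1))) := by
      apply lintegral_congr
      intro x
      rw [← ENNReal.ofReal_pow (by positivity), ← pow_mul, mul_comm]
    have h5 : ∫⁻ x in Dr r, ENNReal.ofReal (|f x| + (n+2) * Gd f x) ^ 2 ≤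
        ENNReal.ofReal (2 * (n+2)^2) *
          ∫⁻ x in Dr r, ENNReal.ofReal (|f x| ^ 2 + Gd f x ^ 2) := by
      rw [← lintegral_const_mul' _ _ ENNReal.ofReal_ne_top]
      apply lintegral_mono
      intro x
      have hg := Gd_nonneg f x
      simp only
      rw [← ENNReal.ofReal_pow (by positivity), ← ENNReal.ofReal_mul (by positivity)]
      apply ENNReal.ofReal_le_ofReal
      have hn : (0:ℝ) ≤ n := Nat.cast_nonneg n
      have e1 : (|f x| + (n+2) * Gd f x) ^ 2 ≤ ((n+2) * (|f x| + Gd f x)) ^ 2 := by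
        apply pow_le_pow_left₀ (by positivity)
        nlinarith [abs_nonneg (f x)]
      have e2 : (|f x| + Gd f x) ^ 2 ≤ 2 * (|f x| ^ 2 + Gd f x ^ 2) := by
        nlinarith [sq_nonneg (|f x| - Gd f x)]
      calc _ ≤ _ := e1
        _ = (n+2)^2 * (|f x| + Gd f x) ^ 2 := by ring
        _ ≤ (n+2)^2 * (2 * (|f x| ^ 2 + Gd f x ^ 2)) := by gcongr
        _ = _ := by ring
    have h6 : ∫⁻ x in Dr r, ENNReal.ofReal (|f x| ^ (2 * (n+1+1))) =
        ∫⁻ x in Dr r, ENNReal.ofReal (|f x ^ (n+2)| ^ 2) := by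
      apply lintegral_congr
      intro x
      congr 1
      rw [abs_pow, ← pow_mul]
      ring
    rw [h6]
    calc _ ≤ _ := h1
      _ ≤ C0 * ((∫⁻ x in Dr r, ENNReal.ofReal (|f x| ^ (n+1)) ^ 2) *
            ∫⁻ x in Dr r, ENNReal.ofReal (|f x| + (n+2) * Gd f x) ^ 2) := by
          gcongr
          exact h3
      _ ≤ C0 * ((C * (∫⁻ x in Dr r, ENNReal.ofReal (|f x| ^ 2 + Gd f x ^ 2)) ^ (n+1)) *
            (ENNReal.ofReal (2 * (n+2)^2) *
          ∫⁻ x in Dr r, ENNReal.ofReal (|f x| ^ 2 + Gd f x ^ 2))) := by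
          rw [h4]
          gcongr
          exact ih f hf
      _ = _ := by ring

lemma sob4 (r : ℝ) (hr : 0 < r) (f : (Fin 2 → ℝ) → ℝ) (hf : ContDiffOn ℝ 1 f (Dr r))
    (hG1 : ∫⁻ x in Dr r, ENNReal.ofReal (Gd f x ^ 2) < ⊤) (n : ℕ) :
    ∫⁻ x in Dr r, ENNReal.ofReal (|f x| ^ (2 * (n+1))) < ⊤ := by
  have hGc := Gd_contOn (isOpen_Dr r) hf
  have h1 : ∫⁻ x in Dr r, ENNReal.ofReal (Gd f x) < ⊤ := by
    calc _ ≤ ∫⁻ x in Dr r, (1 + ENNReal.ofReal (Gd f x ^ 2)) := by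
          apply lintegral_mono
          intro x
          simp only
          rw [← ENNReal.ofReal_one, ← ENNReal.ofReal_add (by norm_num) (by positivity)]
          apply ENNReal.ofReal_le_ofReal
          nlinarith [sq_nonneg (Gd f x - 1)]
      _ = volume (Dr r) + ∫⁻ x in Dr r, ENNReal.ofReal (Gd f x ^ 2) := by
          rw [lintegral_add_left measurable_const]
          simp
      _ < ⊤ := ENNReal.add_lt_top.2 ⟨vol_Dr_lt r, hG1⟩
  have h2 := sob2 r hr f hf h1
  obtain ⟨C, hC, h3⟩ := sob1 r hr
  have h4 : ∫⁻ x in Dr r, ENNReal.ofReal (|f x| ^ 2) < ⊤ := by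
    refine (h3 f hf).trans_lt (ENNReal.mul_lt_top hC (ENNReal.pow_lt_top ?_))
    calc _ ≤ ∫⁻ x in Dr r, (ENNReal.ofReal |f x| + ENNReal.ofReal (Gd f x)) :=
          lintegral_mono fun x => ENNReal.ofReal_add_le
      _ = _ := lintegral_add_left' (aem (isOpen_Dr r) hf.continuousOn.abs) _
      _ < ⊤ := ENNReal.add_lt_top.2 ⟨h2, h1⟩
  obtain ⟨C', hC', h5⟩ := sob3 r hr n
  refine (h5 f hf).trans_lt (ENNReal.mul_lt_top hC' (ENNReal.pow_lt_top ?_))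
  calc _ ≤ ∫⁻ x in Dr r, (ENNReal.ofReal (|f x| ^ 2) + ENNReal.ofReal (Gd f x ^ 2)) :=
          lintegral_mono fun x => ENNReal.ofReal_add_le
      _ = _ := lintegral_add_left' (aem (isOpen_Dr r) (hf.continuousOn.abs.pow 2)) _
      _ < ⊤ := ENNReal.add_lt_top.2 ⟨h4, hG1⟩
end Stmt17

namespace Stmt17
open MeasureTheory Set

/-- admissible maps -/
def Adm {m : ℕ} (r α : ℝ) (u : (Fin 2 → ℝ) → (Fin m → ℝ)) : Prop :=
  ContDiffOn ℝ (⊤ : ℕ∞) u (Dr r) ∧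
    ∀ x ∈ Dr r, ∑ i, ∑ a, (fderiv ℝ u x (Pi.single i 1) a) ^ 2 ≤ α ^ 2

/-- universal differential expressions of order at most `N` and weight `w` -/
inductive Wt (m : ℕ) (r α : ℝ) (N : ℕ) :
    ℕ → (((Fin 2 → ℝ) → (Fin m → ℝ)) → (Fin 2 → ℝ) → ℝ) → Prop
  | const (c : ℝ) : Wt m r α N 0 (fun _ _ => c)
  | zero (w : ℕ) : Wt m r α N w (fun _ _ => 0)
  | der (j : ℕ) (hj : j ≤ N) (I : Fin (j+1) → Fin 2) (a : Fin m) :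
      Wt m r α N j (fun u x => pdIter u (j+1) x I a)
  | add {w : ℕ} {f g} (hf : Wt m r α N w f) (hg : Wt m r α N w g) :
      Wt m r α N w (fun u x => f u x + g u x)
  | mul {w w1 w2 : ℕ} {f g} (hf : Wt m r α N w1 f) (hg : Wt m r α N w2 g) (hw : w = w1 + w2) :
      Wt m r α N w (fun u x => f u x * g u x)
  | inv {f} (hf : Wt m r α N 0 f) (h1 : ∀ u, Adm r α u → ∀ x ∈ Dr r, 1 ≤ f u x) :
      Wt m r α N 0 (fun u x => (f u x)⁻¹)
  | congr {w : ℕ} {f g} (hf : Wt m r α N w f)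
      (h : ∀ u, Adm r α u → ∀ x ∈ Dr r, g u x = f u x) : Wt m r α N w g

variable {m : ℕ} {r α : ℝ}

lemma smooth_fderiv {F : Type*} [NormedAddCommGroup F] [NormedSpace ℝ F]
    {f : (Fin 2 → ℝ) → F} (hf : ContDiffOn ℝ (⊤ : ℕ∞) f (Dr r)) (v : Fin 2 → ℝ) :
    ContDiffOn ℝ (⊤ : ℕ∞) (fun x => fderiv ℝ f x v) (Dr r) := by
  have := hf.fderiv_of_isOpen (m := ((⊤ : ℕ∞) : WithTop ℕ∞)) (isOpen_Dr r) (by simp)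
  exact this.clm_apply contDiffOn_const

lemma smooth_diffAt {F : Type*} [NormedAddCommGroup F] [NormedSpace ℝ F]
    {f : (Fin 2 → ℝ) → F} (hf : ContDiffOn ℝ (⊤ : ℕ∞) f (Dr r)) {x : Fin 2 → ℝ}
    (hx : x ∈ Dr r) : DifferentiableAt ℝ f x :=
  (hf.differentiableOn (by simp)).differentiableAt ((isOpen_Dr r).mem_nhds hx)

lemma smooth_pdIter {u : (Fin 2 → ℝ) → (Fin m → ℝ)} (hu : ContDiffOn ℝ (⊤ : ℕ∞) u (Dr r)) :
    ∀ (l : ℕ) (I : Fin l → Fin 2), ContDiffOn ℝ (⊤ : ℕ∞) (fun y => pdIter u l y I) (Dr r)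
  | 0, _ => hu
  | (l+1), I => smooth_fderiv (smooth_pdIter hu l (Fin.tail I)) _

lemma fderiv_comp_apply {ι : Type*} [Fintype ι] {f : (Fin 2 → ℝ) → (ι → ℝ)} {x v : Fin 2 → ℝ}
    (hf : DifferentiableAt ℝ f x) (a : ι) :
    fderiv ℝ f x v a = fderiv ℝ (fun y => f y a) x v := by
  have h := (hasFDerivAt_pi'.1 hf.hasFDerivAt a).fderiv
  rw [h]; rfl

lemma dd_pdIter {u : (Fin 2 → ℝ) → (Fin m → ℝ)} (hu : ContDiffOn ℝ (⊤ : ℕ∞) u (Dr r))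
    (l : ℕ) (I : Fin l → Fin 2) (a : Fin m) (i : Fin 2) {x : Fin 2 → ℝ} (hx : x ∈ Dr r) :
    dd i (fun y => pdIter u l y I a) x = pdIter u (l+1) x (Fin.cons i I) a := by
  show _ = fderiv ℝ (fun y => pdIter u l y (Fin.tail (Fin.cons i I : Fin (l+1) → Fin 2))) x
    (Pi.single ((Fin.cons i I : Fin (l+1) → Fin 2) 0) 1) a
  rw [Fin.tail_cons, Fin.cons_zero, fderiv_comp_apply (smooth_diffAt (smooth_pdIter hu l I) hx)]
  rfl

lemma dd_add {f g : (Fin 2 → ℝ) → ℝ} {x : Fin 2 → ℝ} (i : Fin 2) (hf : DifferentiableAt ℝ f x)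
    (hg : DifferentiableAt ℝ g x) : dd i (fun y => f y + g y) x = dd i f x + dd i g x := by
  unfold dd
  rw [fderiv_fun_add hf hg]; rfl

lemma dd_mul {f g : (Fin 2 → ℝ) → ℝ} {x : Fin 2 → ℝ} (i : Fin 2) (hf : DifferentiableAt ℝ f x)
    (hg : DifferentiableAt ℝ g x) :
    dd i (fun y => f y * g y) x = dd i f x * g x + f x * dd i g x := by
  unfold dd
  rw [fderiv_fun_mul hf hg]
  simp only [_root_.add_apply, _root_.smul_apply, smul_eq_mul]
  ring

lemma dd_sum {ι : Type*} (s : Finset ι) {f : ι → (Fin 2 → ℝ) → ℝ} {x : Fin 2 → ℝ} (i : Fin 2)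
    (hf : ∀ k ∈ s, DifferentiableAt ℝ (f k) x) :
    dd i (fun y => ∑ k ∈ s, f k y) x = ∑ k ∈ s, dd i (f k) x := by
  unfold dd
  rw [fderiv_fun_sum hf]
  simp

lemma dd_inv {f : (Fin 2 → ℝ) → ℝ} {x : Fin 2 → ℝ} (i : Fin 2) (hf : DifferentiableAt ℝ f x)
    (h0 : f x ≠ 0) :
    dd i (fun y => (f y)⁻¹) x = -1 * ((f x)⁻¹ * (f x)⁻¹ * dd i f x) := by
  unfold dd
  have h1 := (hasDerivAt_inv h0).comp_hasFDerivAt x hf.hasFDerivAt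
  have h2 : fderiv ℝ (fun y => (f y)⁻¹) x = _ := h1.fderiv
  rw [h2]
  simp only [_root_.smul_apply, smul_eq_mul]
  field_simp

lemma dd_congr {f g : (Fin 2 → ℝ) → ℝ} (h : ∀ x ∈ Dr r, f x = g x) (i : Fin 2) {x : Fin 2 → ℝ}
    (hx : x ∈ Dr r) : dd i f x = dd i g x := by
  unfold dd
  rw [Filter.EventuallyEq.fderiv_eq]
  filter_upwards [(isOpen_Dr r).mem_nhds hx] with y hy using h y hy

lemma Wt.smooth {N w : ℕ} {f} (h : Wt m r α N w f) {u} (hu : Adm r α u) :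
    ContDiffOn ℝ (⊤ : ℕ∞) (f u) (Dr r) := by
  induction h with
  | const c => exact contDiffOn_const
  | zero w => exact contDiffOn_const
  | der j hj I a => exact contDiffOn_pi.1 (smooth_pdIter hu.1 (j+1) I) a
  | add hf hg ihf ihg => exact ihf.add ihg
  | mul hf hg hw ihf ihg => exact ihf.mul ihg
  | inv hf h1 ih => exact ih.inv (fun x hx => by have := h1 u hu x hx; positivity)
  | congr hf h ih => exact ih.congr (h u hu)

lemma Wt.diffAt {N w : ℕ} {f} (h : Wt m r α N w f) {u} (hu : Adm r α u) {x} (hx : x ∈ Dr r) :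
    DifferentiableAt ℝ (f u) x := smooth_diffAt (h.smooth hu) hx

lemma Wt.mono {N w : ℕ} {f} (h : Wt m r α N w f) {N' : ℕ} (hN : N ≤ N') : Wt m r α N' w f := by
  induction h with
  | const c => exact .const _
  | zero w => exact .zero _
  | der j hj I a => exact .der _ (hj.trans hN) _ _
  | add hf hg ihf ihg => exact ihf.add ihg
  | mul hf hg hw ihf ihg => exact ihf.mul ihg hw
  | inv hf h1 ih => exact ih.inv h1
  | congr hf h ih => exact ih.congr h

lemma Wt.sum {ι : Type*} (s : Finset ι) {N w : ℕ} {f : ι → _} (h : ∀ k ∈ s, Wt m r α N w (f k)) :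
    Wt m r α N w (fun u x => ∑ k ∈ s, f k u x) := by
  classical
  induction s using Finset.induction_on with
  | empty => simpa using Wt.zero w
  | insert a s ha ih =>
    simp_rw [Finset.sum_insert ha]
    exact (h a (Finset.mem_insert_self _ _)).add
      (ih fun k hk => h k (Finset.mem_insert_of_mem hk))

lemma Wt.neg {N w : ℕ} {f} (h : Wt m r α N w f) : Wt m r α N w (fun u x => - f u x) :=
  ((Wt.const (-1)).mul h (by simp : w = 0 + w)).congr (fun u _ x _ => by ring)

lemma Wt.sub {N w : ℕ} {f g} (h : Wt m r α N w f) (h' : Wt m r α N w g) :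
    Wt m r α N w (fun u x => f u x - g u x) :=
  (h.add h'.neg).congr (fun u _ x _ => by ring)

lemma Wt.dd {N w : ℕ} {f} (h : Wt m r α N w f) (i : Fin 2) :
    Wt m r α (N+1) (w+1) (fun u x => dd i (f u) x) := by
  induction h with
  | const c => exact (Wt.zero _).congr (fun u _ x _ => by simp [Stmt17.dd])
  | zero w => exact (Wt.zero _).congr (fun u _ x _ => by simp [Stmt17.dd])
  | der j hj I a =>
    exact (Wt.der (j+1) (by omega) (Fin.cons i I) a).congr
      (fun u hu x hx => dd_pdIter hu.1 (j+1) I a i hx)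
  | add hf hg ihf ihg =>
    exact (ihf.add ihg).congr (fun u hu x hx => dd_add i (hf.diffAt hu hx) (hg.diffAt hu hx))
  | @mul w w1 w2 f g hf hg hw ihf ihg =>
    have h1 := ihf.mul (hg.mono (Nat.le_succ N)) (by omega : w + 1 = w1 + 1 + w2)
    have h2 := (hf.mono (Nat.le_succ N)).mul ihg (by omega : w + 1 = w1 + (w2 + 1))
    exact (h1.add h2).congr (fun u hu x hx => dd_mul i (hf.diffAt hu hx) (hg.diffAt hu hx))
  | @inv f hf h1 ih =>
    have hi := (hf.inv h1).mono (Nat.le_succ N)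
    have h2 := (Wt.const (N := N+1) (-1)).mul ((hi.mul hi (rfl : 0 = 0 + 0)).mul ih (rfl : 0 + 1 = 0 + (0 + 1)))
      (rfl : 0 + 1 = 0 + (0 + 1))
    refine Wt.congr (w := 0 + 1) h2 (fun u hu x hx => ?_)
    exact dd_inv i (hf.diffAt hu hx) (by have := h1 u hu x hx; positivity)
  | congr hf h ih =>
    exact ih.congr (fun u hu x hx => dd_congr (h u hu) i hx)

/-- total size of derivatives of `Du` of orders `1..N` -/
def RR (N : ℕ) (u : (Fin 2 → ℝ) → (Fin m → ℝ)) (x : Fin 2 → ℝ) : ℝ :=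
  ∑ j ∈ Finset.Icc 1 N, ∑ I : Fin (j+1) → Fin 2, ∑ a, |pdIter u (j+1) x I a|

lemma RR_nonneg (N : ℕ) (u : (Fin 2 → ℝ) → (Fin m → ℝ)) (x : Fin 2 → ℝ) : 0 ≤ RR N u x := by
  unfold RR; positivity

def bd (w : ℕ) (R : ℝ) : ℝ := if w = 0 then 1 else R + R ^ w

lemma bd_nonneg (w : ℕ) {R : ℝ} (hR : 0 ≤ R) : 0 ≤ bd w R := by
  unfold bd; split_ifs <;> positivity

lemma pow_le_bd {R : ℝ} (hR : 0 ≤ R) {n M : ℕ} (h1 : 1 ≤ n) (h2 : n ≤ M) : R ^ n ≤ R + R ^ M := by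
  rcases le_total R 1 with h | h
  · have := pow_le_of_le_one hR h (by omega : n ≠ 0)
    have := pow_nonneg hR M
    linarith
  · have := pow_le_pow_right₀ h h2
    linarith

lemma bd_mul (w w' : ℕ) {R : ℝ} (hR : 0 ≤ R) : bd w R * bd w' R ≤ 4 * bd (w + w') R := by
  have h0 := bd_nonneg (w + w') hR
  unfold bd at *
  by_cases h : w = 0
  · subst h
    simp only [zero_add, if_true] at *
    linarith
  by_cases h' : w' = 0
  · subst h'
    simp only [add_zero, if_true] at *
    linarith
  rw [if_neg h, if_neg h', if_neg (by omega)]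
  have e : (R + R ^ w) * (R + R ^ w') = R ^ 2 + R ^ (w' + 1) + R ^ (w + 1) + R ^ (w + w') := by ring
  rw [e]
  have h1 := pow_le_bd hR (n := 2) (M := w + w') (by omega) (by omega)
  have h2 := pow_le_bd hR (n := w' + 1) (M := w + w') (by omega) (by omega)
  have h3 := pow_le_bd hR (n := w + 1) (M := w + w') (by omega) (by omega)
  linarith

lemma du_le {u : (Fin 2 → ℝ) → (Fin m → ℝ)} (hα : 0 ≤ α) (hu : Adm r α u) {x : Fin 2 → ℝ}
    (hx : x ∈ Dr r) (i : Fin 2) (a : Fin m) : |fderiv ℝ u x (Pi.single i 1) a| ≤ α := by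
  apply abs_le_of_sq_le_sq _ hα
  refine le_trans ?_ (hu.2 x hx)
  refine le_trans ?_ (Finset.single_le_sum (f := fun i => ∑ a, (fderiv ℝ u x (Pi.single i 1) a) ^ 2)
    (fun j _ => by positivity) (Finset.mem_univ i))
  exact Finset.single_le_sum (f := fun a => (fderiv ℝ u x (Pi.single i 1) a) ^ 2)
    (fun j _ => by positivity) (Finset.mem_univ a)

lemma Wt.bound (hα : 0 ≤ α) {N w : ℕ} {f} (h : Wt m r α N w f) :
    ∃ C : ℝ, 0 ≤ C ∧ ∀ u, Adm r α u → ∀ x ∈ Dr r, |f u x| ≤ C * bd w (RR N u x) := by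
  induction h with
  | const c => exact ⟨|c|, abs_nonneg _, fun u _ x _ => by simp [bd]⟩
  | zero w => exact ⟨0, le_rfl, fun u _ x _ => by simp⟩
  | der j hj I a =>
    rcases Nat.eq_zero_or_pos j with h | h
    · subst h
      refine ⟨α, hα, fun u hu x hx => ?_⟩
      simp only [bd, if_true, mul_one]
      exact du_le hα hu hx (I 0) a
    · refine ⟨1, zero_le_one, fun u hu x hx => ?_⟩
      have hR := RR_nonneg N u x
      have : |pdIter u (j+1) x I a| ≤ RR N u x := by
        unfold RR
        refine le_trans ?_ (Finset.single_le_sum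
          (f := fun j => ∑ I : Fin (j+1) → Fin 2, ∑ a, |pdIter u (j+1) x I a|)
          (fun j _ => by positivity) (Finset.mem_Icc.2 ⟨h, hj⟩))
        refine le_trans ?_ (Finset.single_le_sum
          (f := fun I : Fin (j+1) → Fin 2 => ∑ a, |pdIter u (j+1) x I a|)
          (fun j _ => by positivity) (Finset.mem_univ I))
        exact Finset.single_le_sum
          (f := fun a => |pdIter u (j+1) x I a|)
          (fun j _ => by positivity) (Finset.mem_univ a)
      rw [bd, if_neg (by omega), one_mul]
      have := pow_nonneg hR j
      linarith
  | @add w f g hf hg ihf ihg =>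
    obtain ⟨C, hC, h1⟩ := ihf
    obtain ⟨C', hC', h2⟩ := ihg
    refine ⟨C + C', by positivity, fun u hu x hx => ?_⟩
    rw [add_mul]
    exact (abs_add_le _ _).trans (add_le_add (h1 u hu x hx) (h2 u hu x hx))
  | @mul w w1 w2 f g hf hg hw ihf ihg =>
    obtain ⟨C, hC, h1⟩ := ihf
    obtain ⟨C', hC', h2⟩ := ihg
    refine ⟨C * C' * 4, by positivity, fun u hu x hx => ?_⟩
    subst hw
    have hR := RR_nonneg N u x
    rw [abs_mul]
    calc _ ≤ (C * bd w1 (RR N u x)) * (C' * bd w2 (RR N u x)) :=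
          mul_le_mul (h1 u hu x hx) (h2 u hu x hx) (abs_nonneg _)
            (mul_nonneg hC (bd_nonneg _ hR))
      _ = C * C' * (bd w1 (RR N u x) * bd w2 (RR N u x)) := by ring
      _ ≤ C * C' * (4 * bd (w1 + w2) (RR N u x)) := by
          exact mul_le_mul_of_nonneg_left (bd_mul _ _ hR) (by positivity)
      _ = _ := by ring
  | inv hf h1 ih =>
    refine ⟨1, zero_le_one, fun u hu x hx => ?_⟩
    have := h1 u hu x hx
    simp only [bd, if_true, mul_one]
    rw [abs_of_nonneg (by positivity)]
    exact inv_le_one_of_one_le₀ this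
  | congr hf h ih =>
    obtain ⟨C, hC, h1⟩ := ih
    exact ⟨C, hC, fun u hu x hx => by rw [h u hu x hx]; exact h1 u hu x hx⟩

end Stmt17

namespace Stmt17
open MeasureTheory Set

variable {m : ℕ} {r α : ℝ}

/-- vector-valued universal expressions -/
def VWt (m : ℕ) (r α : ℝ) (N w : ℕ)
    (V : ((Fin 2 → ℝ) → (Fin m → ℝ)) → (Fin 2 → ℝ) → (Fin 2 ⊕ Fin m → ℝ)) : Prop :=
  ∀ A, Wt m r α N w (fun u x => V u x A)

lemma smooth_gr {u : (Fin 2 → ℝ) → (Fin m → ℝ)} (hu : ContDiffOn ℝ (⊤ : ℕ∞) u (Dr r)) :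
    ContDiffOn ℝ (⊤ : ℕ∞) (gr u) (Dr r) := by
  rw [contDiffOn_pi]
  rintro (j | a)
  · show ContDiffOn ℝ _ (fun x : Fin 2 → ℝ => x j) _
    exact contDiffOn_pi.1 contDiffOn_id j
  · exact contDiffOn_pi.1 hu a

lemma pd_gr {u : (Fin 2 → ℝ) → (Fin m → ℝ)} (hu : ContDiffOn ℝ (⊤ : ℕ∞) u (Dr r))
    {x : Fin 2 → ℝ} (hx : x ∈ Dr r) (i : Fin 2) :
    pd (gr u) i x = Sum.elim (Pi.single i 1) (pdIter u 1 x (fun _ => i)) := by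
  ext A
  unfold pd
  rw [fderiv_comp_apply (smooth_diffAt (smooth_gr hu) hx)]
  rcases A with j | a
  · show fderiv ℝ (fun y : Fin 2 → ℝ => y j) x (Pi.single i 1) = _
    rw [← fderiv_comp_apply (f := fun y : Fin 2 → ℝ => y) differentiableAt_id]
    simp
  · show fderiv ℝ (fun y : Fin 2 → ℝ => u y a) x (Pi.single i 1) = fderiv ℝ u x (Pi.single i 1) a
    rw [fderiv_comp_apply (smooth_diffAt hu hx)]

lemma VWt.smooth {N w : ℕ} {V} (h : VWt m r α N w V) {u} (hu : Adm r α u) :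
    ContDiffOn ℝ (⊤ : ℕ∞) (V u) (Dr r) := contDiffOn_pi.2 fun A => (h A).smooth hu

lemma pd_apply {f : (Fin 2 → ℝ) → (Fin 2 ⊕ Fin m → ℝ)} {x : Fin 2 → ℝ}
    (hf : DifferentiableAt ℝ f x) (i : Fin 2) (A : Fin 2 ⊕ Fin m) :
    pd f i x A = dd i (fun y => f y A) x := fderiv_comp_apply hf A

lemma pd_congr {f g : (Fin 2 → ℝ) → (Fin 2 ⊕ Fin m → ℝ)} (h : ∀ x ∈ Dr r, f x = g x)
    (i : Fin 2) {x : Fin 2 → ℝ} (hx : x ∈ Dr r) : pd f i x = pd g i x := by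
  unfold pd
  rw [Filter.EventuallyEq.fderiv_eq]
  filter_upwards [(isOpen_Dr r).mem_nhds hx] with y hy using h y hy

lemma VWt.pd {N w : ℕ} {V} (h : VWt m r α N w V) (i : Fin 2) :
    VWt m r α (N+1) (w+1) (fun u => pd (V u) i) := fun A =>
  ((h A).dd i).congr (fun _ hu _ hx => pd_apply (smooth_diffAt (h.smooth hu) hx) i A)

lemma VWt.mono {N w : ℕ} {V} (h : VWt m r α N w V) {N'} (hN : N ≤ N') : VWt m r α N' w V :=
  fun A => (h A).mono hN

lemma VWt.sub {N w : ℕ} {V W} (h : VWt m r α N w V) (h' : VWt m r α N w W) :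
    VWt m r α N w (fun u x => V u x - W u x) := fun A => (h A).sub (h' A)

lemma VWt.add {N w : ℕ} {V W} (h : VWt m r α N w V) (h' : VWt m r α N w W) :
    VWt m r α N w (fun u x => V u x + W u x) := fun A => (h A).add (h' A)

lemma VWt.congr {N w : ℕ} {V W} (h : VWt m r α N w V)
    (e : ∀ u, Adm r α u → ∀ x ∈ Dr r, W u x = V u x) : VWt m r α N w W :=
  fun A => (h A).congr (fun u hu x hx => congrFun (e u hu x hx) A)

lemma wt_pdgr (i : Fin 2) : VWt m r α 0 0 (fun u => pd (gr u) i) := by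
  rintro (j | a)
  · exact (Wt.const (Pi.single (M := fun _ => ℝ) i (1:ℝ) j)).congr
      (fun u hu x hx => by simp only; rw [pd_gr hu.1 hx]; rfl)
  · exact (Wt.der 0 le_rfl (fun _ => i) a).congr
      (fun u hu x hx => by simp only; rw [pd_gr hu.1 hx]; rfl)

lemma wt_dot {N w w1 w2 : ℕ} {V W} (h : VWt m r α N w1 V) (h' : VWt m r α N w2 W)
    (hw : w = w1 + w2) : Wt m r α N w (fun u x => dotA (V u x) (W u x)) := by
  unfold dotA
  exact Wt.sum _ (fun A _ => (h A).mul (h' A) hw)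

lemma wt_gmet (i j : Fin 2) : Wt m r α 0 0 (fun u x => gmet (gr u) x i j) :=
  wt_dot (wt_pdgr i) (wt_pdgr j) rfl

lemma gmet_eq {u : (Fin 2 → ℝ) → (Fin m → ℝ)} (hu : ContDiffOn ℝ (⊤ : ℕ∞) u (Dr r))
    {x : Fin 2 → ℝ} (hx : x ∈ Dr r) (i j : Fin 2) : gmet (gr u) x i j =
      (if i = j then 1 else 0) + ∑ a, pdIter u 1 x (fun _ => i) a * pdIter u 1 x (fun _ => j) a := by
  show dotA _ _ = _
  rw [pd_gr hu hx, pd_gr hu hx, dotA, Fintype.sum_sum_type]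
  simp only [Sum.elim_inl, Sum.elim_inr]
  congr 1
  simp [Pi.single_apply, eq_comm]

lemma gmet_symm (F : (Fin 2 → ℝ) → (Fin 2 ⊕ Fin m → ℝ)) (x : Fin 2 → ℝ) (i j : Fin 2) :
    gmet F x i j = gmet F x j i := by
  show dotA _ _ = dotA _ _
  unfold dotA
  simp_rw [mul_comm]

lemma det_ge {u : (Fin 2 → ℝ) → (Fin m → ℝ)} (hu : ContDiffOn ℝ (⊤ : ℕ∞) u (Dr r))
    {x : Fin 2 → ℝ} (hx : x ∈ Dr r) : 1 ≤ (gmet (gr u) x).det := by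
  rw [Matrix.det_fin_two, gmet_eq hu hx, gmet_eq hu hx, gmet_eq hu hx, gmet_eq hu hx]
  simp only [if_true]
  have h := Finset.sum_mul_sq_le_sq_mul_sq Finset.univ (fun a => pdIter u 1 x (fun _ => 0) a)
    (fun a => pdIter u 1 x (fun _ => 1) a)
  have e : ∑ a, pdIter u 1 x (fun _ => 1) a * pdIter u 1 x (fun _ => 0) a
      = ∑ a, pdIter u 1 x (fun _ => 0) a * pdIter u 1 x (fun _ => 1) a := by
    simp_rw [mul_comm]
  rw [e]
  have h0 : 0 ≤ ∑ a, pdIter u 1 x (fun _ => 0) a * pdIter u 1 x (fun _ => 0) a :=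
    Finset.sum_nonneg fun a _ => mul_self_nonneg _
  have h1 : 0 ≤ ∑ a, pdIter u 1 x (fun _ => 1) a * pdIter u 1 x (fun _ => 1) a :=
    Finset.sum_nonneg fun a _ => mul_self_nonneg _
  simp only [sq] at h
  norm_num
  nlinarith

lemma wt_det : Wt m r α 0 0 (fun u x => (gmet (gr u) x).det) := by
  refine Wt.congr (((wt_gmet 0 0).mul (wt_gmet 1 1) rfl).sub ((wt_gmet 0 1).mul (wt_gmet 1 0) rfl))
    (fun u hu x hx => ?_)
  rw [Matrix.det_fin_two]

lemma wt_ginv (i j : Fin 2) : Wt m r α 0 0 (fun u x => (gmet (gr u) x)⁻¹ i j) := by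
  have hi := Wt.inv (wt_det (m := m) (r := r) (α := α)) (fun u hu x hx => det_ge hu.1 hx)
  have e : ∀ (u : (Fin 2 → ℝ) → (Fin m → ℝ)) x, (gmet (gr u) x)⁻¹ i j =
      ((gmet (gr u) x).det)⁻¹ * (gmet (gr u) x).adjugate i j := by
    intro u x
    rw [Matrix.inv_def, Ring.inverse_eq_inv']; rfl
  have ha : Wt m r α 0 0 (fun u x => (gmet (gr u) x).adjugate i j) := by
    simp_rw [Matrix.adjugate_fin_two]
    fin_cases i <;> fin_cases j
    · exact wt_gmet 1 1
    · exact (wt_gmet 0 1).neg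
    · exact (wt_gmet 1 0).neg
    · exact wt_gmet 0 0
  exact (hi.mul ha (rfl : 0 = 0 + 0)).congr (fun u _ x _ => e u x)

/-- the normal projection matrix -/
def PI (F : (Fin 2 → ℝ) → (Fin 2 ⊕ Fin m → ℝ)) (A B : Fin 2 ⊕ Fin m) (x : Fin 2 → ℝ) : ℝ :=
  (if A = B then 1 else 0) - ∑ k, ∑ l, (gmet F x)⁻¹ k l * pd F l x B * pd F k x A

lemma nproj_apply (F : (Fin 2 → ℝ) → (Fin 2 ⊕ Fin m → ℝ)) (x : Fin 2 → ℝ)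
    (v : Fin 2 ⊕ Fin m → ℝ) (A : Fin 2 ⊕ Fin m) : nproj F x v A = ∑ B, PI F A B x * v B := by
  unfold nproj PI dotA
  simp only [Pi.sub_apply, Finset.sum_apply, Pi.smul_apply, smul_eq_mul, sub_mul,
    Finset.sum_sub_distrib, ite_mul, one_mul, zero_mul, Finset.sum_ite_eq, Finset.mem_univ, if_true]
  congr 1
  simp only [Finset.sum_mul, Finset.mul_sum]
  conv_rhs => rw [Finset.sum_comm]
  refine Finset.sum_congr rfl fun k _ => ?_
  conv_rhs => rw [Finset.sum_comm]
  refine Finset.sum_congr rfl fun l _ => ?_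
  refine Finset.sum_congr rfl fun B _ => ?_
  ring

lemma nproj_add (F : (Fin 2 → ℝ) → (Fin 2 ⊕ Fin m → ℝ)) (x : Fin 2 → ℝ)
    (v w : Fin 2 ⊕ Fin m → ℝ) : nproj F x (v + w) = nproj F x v + nproj F x w := by
  ext A
  simp only [nproj_apply, Pi.add_apply, mul_add, Finset.sum_add_distrib]

lemma wt_PI (A B : Fin 2 ⊕ Fin m) : Wt m r α 0 0 (fun u x => PI (gr u) A B x) := by
  unfold PI
  apply (Wt.const _).sub
  refine Wt.sum _ fun k _ => Wt.sum _ fun l _ => ?_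
  exact ((wt_ginv k l).mul (wt_pdgr l B) (rfl : 0 = 0 + 0)).mul (wt_pdgr k A) rfl

lemma VWt.nproj {N w : ℕ} {V} (h : VWt m r α N w V) :
    VWt m r α N w (fun u x => nproj (gr u) x (V u x)) := by
  intro A
  simp_rw [nproj_apply]
  exact Wt.sum _ fun B _ => ((wt_PI A B).mono (Nat.zero_le _)).mul (h B) (by simp)

lemma dotA_add_left (v w z : Fin 2 ⊕ Fin m → ℝ) : dotA (v + w) z = dotA v z + dotA w z := by
  simp [dotA, add_mul, Finset.sum_add_distrib]

lemma dotA_sub_left (v w z : Fin 2 ⊕ Fin m → ℝ) : dotA (v - w) z = dotA v z - dotA w z := by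
  simp [dotA, sub_mul, Finset.sum_sub_distrib]

lemma dotA_smul_left (c : ℝ) (v z : Fin 2 ⊕ Fin m → ℝ) : dotA (c • v) z = c * dotA v z := by
  unfold dotA
  rw [Finset.mul_sum]
  refine Finset.sum_congr rfl fun A _ => ?_
  simp [mul_assoc]

lemma dotA_sum_left {ι : Type*} (s : Finset ι) (v : ι → Fin 2 ⊕ Fin m → ℝ)
    (z : Fin 2 ⊕ Fin m → ℝ) : dotA (∑ k ∈ s, v k) z = ∑ k ∈ s, dotA (v k) z := by
  simp only [dotA, Finset.sum_apply, Finset.sum_mul]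
  rw [Finset.sum_comm]

lemma dotA_comm (v w : Fin 2 ⊕ Fin m → ℝ) : dotA v w = dotA w v := by
  simp [dotA, mul_comm]

/-- being normal to the graph at `x` -/
def Nrm (F : (Fin 2 → ℝ) → (Fin 2 ⊕ Fin m → ℝ)) (x : Fin 2 → ℝ) (v : Fin 2 ⊕ Fin m → ℝ) : Prop :=
  ∀ l, dotA v (pd F l x) = 0

lemma nproj_of_Nrm {F : (Fin 2 → ℝ) → (Fin 2 ⊕ Fin m → ℝ)} {x : Fin 2 → ℝ}
    {v : Fin 2 ⊕ Fin m → ℝ} (h : Nrm F x v) : nproj F x v = v := by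
  unfold nproj
  simp [h _]

lemma Nrm_nproj {F : (Fin 2 → ℝ) → (Fin 2 ⊕ Fin m → ℝ)} {x : Fin 2 → ℝ}
    (hdet : 1 ≤ (gmet F x).det) (v : Fin 2 ⊕ Fin m → ℝ) : Nrm F x (nproj F x v) := by
  intro p
  unfold nproj
  rw [dotA_sub_left, dotA_sum_left]
  simp_rw [dotA_sum_left, dotA_smul_left]
  have e : ∀ k, dotA (pd F k x) (pd F p x) = gmet F x k p := fun k => rfl
  simp_rw [e]
  have hu : IsUnit (gmet F x).det := by
    rw [isUnit_iff_ne_zero]; positivity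
  have hinv := Matrix.mul_nonsing_inv (gmet F x) hu
  have h2 : ∑ k, ∑ l, (gmet F x)⁻¹ k l * dotA v (pd F l x) * gmet F x k p
      = ∑ l, dotA v (pd F l x) * (gmet F x * (gmet F x)⁻¹) p l := by
    rw [Finset.sum_comm]
    refine Finset.sum_congr rfl fun l _ => ?_
    rw [Matrix.mul_apply, Finset.mul_sum]
    refine Finset.sum_congr rfl fun k _ => ?_
    rw [gmet_symm F x p k]
    ring
  rw [h2, hinv]
  simp [Matrix.one_apply]

lemma pd_symm {F : (Fin 2 → ℝ) → (Fin 2 ⊕ Fin m → ℝ)} (hF : ContDiffOn ℝ (⊤ : ℕ∞) F (Dr r))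
    {x : Fin 2 → ℝ} (hx : x ∈ Dr r) (i j : Fin 2) : pd (pd F i) j x = pd (pd F j) i x := by
  have hc : ContDiffAt ℝ (⊤ : ℕ∞) F x := hF.contDiffAt ((isOpen_Dr r).mem_nhds hx)
  have hs : IsSymmSndFDerivAt ℝ F x := hc.isSymmSndFDerivAt (by
    rw [minSmoothness_of_isRCLikeNormedField]; 
    exact (WithTop.coe_le_coe.2 le_top : ((2 : ℕ∞) : WithTop ℕ∞) ≤ _))
  have hd : DifferentiableAt ℝ (fderiv ℝ F) x := by
    have := hF.fderiv_of_isOpen (m := ((⊤ : ℕ∞) : WithTop ℕ∞)) (isOpen_Dr r) (by simp)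
    exact smooth_diffAt this hx
  have e : ∀ i j, pd (pd F i) j x = fderiv ℝ (fderiv ℝ F) x (Pi.single j 1) (Pi.single i 1) := by
    intro i j
    show fderiv ℝ (fun y => fderiv ℝ F y (Pi.single i 1)) x (Pi.single j 1) = _
    rw [fderiv_clm_apply hd (differentiableAt_const _)]
    simp
  rw [e, e]
  exact hs.eq _ _

/-- vertical vector field of derivatives -/
def vv (u : (Fin 2 → ℝ) → (Fin m → ℝ)) (l : ℕ) (I : Fin l → Fin 2) (x : Fin 2 → ℝ) :
    Fin 2 ⊕ Fin m → ℝ := Sum.elim 0 (pdIter u l x I)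

lemma wt_vv (l : ℕ) (I : Fin (l+1) → Fin 2) : VWt m r α l l (fun u => vv u (l+1) I) := by
  rintro (j | a)
  · exact Wt.zero _
  · exact Wt.der l le_rfl I a

lemma pd_vv {u : (Fin 2 → ℝ) → (Fin m → ℝ)} (hu : Adm r α u) (l : ℕ) (I : Fin (l+2) → Fin 2)
    {x : Fin 2 → ℝ} (hx : x ∈ Dr r) :
    pd (vv u (l+1) (Fin.tail I)) (I 0) x = vv u (l+2) I x := by
  ext A
  rw [pd_apply (smooth_diffAt ((wt_vv l (Fin.tail I)).smooth hu) hx)]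
  rcases A with j | a
  · show dd (I 0) (fun y => 0) x = 0
    simp [dd]
  · show dd (I 0) (fun y => pdIter u (l+1) y (Fin.tail I) a) x = pdIter u (l+2) x I a
    rw [dd_pdIter hu.1 _ _ _ _ hx]
    congr 1
    rw [Fin.cons_self_tail]

lemma pd_pd_gr {u : (Fin 2 → ℝ) → (Fin m → ℝ)} (hu : Adm r α u) (I : Fin 2 → Fin 2)
    {x : Fin 2 → ℝ} (hx : x ∈ Dr r) : pd (pd (gr u) (I 0)) (I 1) x = vv u 2 I x := by
  rw [pd_symm (smooth_gr hu.1) hx]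
  ext A
  rw [pd_apply (smooth_diffAt ((wt_pdgr (I 1)).smooth hu) hx)]
  rw [dd_congr (g := fun y => (Sum.elim (Pi.single (I 1) 1) (pdIter u 1 y (fun _ => I 1)) :
    Fin 2 ⊕ Fin m → ℝ) A) (fun y hy => by rw [pd_gr hu.1 hy]) _ hx]
  rcases A with j | a
  · simp [dd, vv]
  · show dd (I 0) (fun y => pdIter u 1 y (fun _ => I 1) a) x = pdIter u 2 x I a
    rw [dd_pdIter hu.1 _ _ _ _ hx]
    congr 1
    ext k
    fin_cases k <;> rfl

lemma wt_chr (i j k : Fin 2) : Wt m r α 1 1 (fun u x => chr (gr u) i j k x) := by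
  unfold chr
  refine Wt.sum _ fun l _ => ?_
  refine ((wt_ginv k l).mono (Nat.zero_le _)).mul (w1 := 0) (w2 := 1) ?_ rfl
  exact wt_dot (((wt_pdgr i).pd j)) ((wt_pdgr l).mono (Nat.zero_le _)) rfl

/-- the derivative of a projected field -/
lemma pd_nproj {N w : ℕ} {V} (h : VWt m r α N w V) {u} (hu : Adm r α u) (i : Fin 2)
    {x : Fin 2 → ℝ} (hx : x ∈ Dr r) (A : Fin 2 ⊕ Fin m) :
    pd (fun y => nproj (gr u) y (V u y)) i x A = nproj (gr u) x (pd (V u) i x) A +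
      ∑ B, dd i (PI (gr u) A B) x * V u x B := by
  rw [pd_apply (smooth_diffAt (h.nproj.smooth hu) hx)]
  simp_rw [nproj_apply]
  have d1 : ∀ B, DifferentiableAt ℝ (PI (gr u) A B) x := fun B => (wt_PI A B).diffAt hu hx
  have d2 : ∀ B, DifferentiableAt ℝ (fun y => V u y B) x := fun B => (h B).diffAt hu hx
  rw [dd_sum (f := fun B y => PI (gr u) A B y * V u y B) _ _ (fun B _ => (d1 B).mul (d2 B)), ← Finset.sum_add_distrib]
  refine Finset.sum_congr rfl fun B _ => ?_
  rw [dd_mul _ (d1 B) (d2 B), pd_apply (smooth_diffAt (h.smooth hu) hx)]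
  ring

lemma wt_cov_aux (l : ℕ) : (∀ I, VWt m r α l (l+1) (fun u x =>
    covIter (gr u) l x I - nproj (gr u) x (vv u (l+2) I x))) := by
  induction l with
  | zero =>
    intro I A
    refine (Wt.zero _).congr (fun u hu x hx => ?_)
    simp only [covIter, sffT]
    rw [pd_pd_gr hu I hx]
    simp
  | succ l ih =>
    have hcov : ∀ I, VWt m r α (l+1) (l+1) (fun u x => covIter (gr u) l x I) := fun I =>
      (((ih I).mono (Nat.le_succ l)).add (wt_vv (l+1) I).nproj).congr (fun u hu x hx => by simp)
    intro I
    set J := Fin.tail I with hJ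
    have h1 : VWt m r α (l+1) (l+2) (fun u x => nproj (gr u) x
        (pd (fun y => covIter (gr u) l y J - nproj (gr u) y (vv u (l+2) J y)) (I 0) x)) :=
      ((ih J).pd (I 0)).nproj
    have h2 : VWt m r α (l+1) (l+2) (fun u x => nproj (gr u) x
        (fun A => ∑ B, dd (I 0) (PI (gr u) A B) x * vv u (l+2) J x B)) := by
      apply VWt.nproj
      intro A
      refine Wt.sum _ fun B _ => ?_
      exact (((wt_PI A B).dd (I 0)).mono (by omega)).mul (wt_vv (l+1) J B) (by omega)
    have h3 : VWt m r α (l+1) (l+2) (fun u x => ∑ a : Fin (l+2), ∑ mm : Fin 2,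
          chr (gr u) (I 0) (J a) mm x • covIter (gr u) l x (Function.update J a mm)) := by
      intro A
      simp only [Finset.sum_apply, Pi.smul_apply, smul_eq_mul]
      refine Wt.sum _ fun a _ => Wt.sum _ fun mm _ => ?_
      exact ((wt_chr _ _ _).mono (by omega)).mul (hcov _ A) (by omega)
    refine ((h1.add h2).sub h3).congr (fun u hu x hx => ?_)
    have hdet := det_ge hu.1 hx
    show nproj (gr u) x (pd (fun y => covIter (gr u) l y J) (I 0) x) - _ - _ = _
    have e1 : pd (fun y => covIter (gr u) l y J) (I 0) x =
        pd (fun y => covIter (gr u) l y J - nproj (gr u) y (vv u (l+2) J y)) (I 0) x +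
        (nproj (gr u) x (vv u (l+1+2) I x) +
        (fun A => ∑ B, dd (I 0) (PI (gr u) A B) x * vv u (l+2) J x B)) := by
      have d1 : DifferentiableAt ℝ (fun y => covIter (gr u) l y J) x :=
        smooth_diffAt ((hcov J).smooth hu) hx
      have d2 : DifferentiableAt ℝ (fun y => nproj (gr u) y (vv u (l+2) J y)) x :=
        smooth_diffAt ((wt_vv (l+1) J).nproj.smooth hu) hx
      have e2 : pd (fun y => covIter (gr u) l y J - nproj (gr u) y (vv u (l+2) J y)) (I 0) x
          = pd (fun y => covIter (gr u) l y J) (I 0) x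
            - pd (fun y => nproj (gr u) y (vv u (l+2) J y)) (I 0) x := by
        unfold pd
        rw [fderiv_fun_sub d1 d2]; rfl
      rw [e2]
      ext A
      simp only [Pi.add_apply, Pi.sub_apply]
      rw [pd_nproj (wt_vv (l+1) J) hu (I 0) hx A, pd_vv hu (l+1) I hx]
      ring
    rw [e1, nproj_add, nproj_add, nproj_of_Nrm (Nrm_nproj hdet (vv u (l+1+2) I x))]
    abel

lemma wt_cov (l : ℕ) (I) : VWt m r α (l+1) (l+1) (fun u x => covIter (gr u) l x I) :=
  (((wt_cov_aux l I).mono (Nat.le_succ l)).add (wt_vv (l+1) I).nproj).congr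
    (fun u hu x hx => by simp)

lemma Nrm_cov {u : (Fin 2 → ℝ) → (Fin m → ℝ)} (hu : Adm r α u) (l : ℕ) {x : Fin 2 → ℝ}
    (hx : x ∈ Dr r) : ∀ I, Nrm (gr u) x (covIter (gr u) l x I) := by
  have hdet := det_ge hu.1 hx
  induction l with
  | zero => exact fun I => Nrm_nproj hdet _
  | succ l ih =>
    intro I p
    show dotA (nproj (gr u) x _ - _) _ = 0
    rw [dotA_sub_left, dotA_sum_left, Nrm_nproj hdet _ p]
    simp_rw [dotA_sum_left, dotA_smul_left, ih _ p]
    simp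

end Stmt17

namespace Stmt17
open MeasureTheory Set

variable {m : ℕ} {r α : ℝ}

/-- tensor lower bound -/
lemma tensor_lower {κ : Type*} [Fintype κ] (n : ℕ) (H : Fin 2 → Fin 2 → ℝ)
    (B : κ → Fin 2 → ℝ) (M : Fin 2 → κ → ℝ) (hB : ∀ i j, ∑ K, B K i * B K j = H i j)
    (hM : ∀ i j, ∑ K, M i K * B K j = if i = j then 1 else 0) (c : ℝ) (hc : ∀ i K, |M i K| ≤ c)
    (T : (Fin n → Fin 2) → ℝ) (I : Fin n → Fin 2) :
    T I ^ 2 ≤ (c ^ n) ^ 2 * Fintype.card (Fin n → κ) *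
      ∑ I, ∑ J, (∏ s, H (I s) (J s)) * (T I * T J) := by
  classical
  set S : (Fin n → κ) → ℝ := fun K => ∑ J, (∏ s, B (K s) (J s)) * T J with hS
  have h1 : ∑ I, ∑ J, (∏ s, H (I s) (J s)) * (T I * T J) = ∑ K, S K ^ 2 := by
    have e : ∀ I J : Fin n → Fin 2, ∏ s, H (I s) (J s) =
        ∑ K : Fin n → κ, (∏ s, B (K s) (I s)) * (∏ s, B (K s) (J s)) := by
      intro I J
      simp_rw [← hB, Fintype.prod_sum, Finset.prod_mul_distrib]
    simp_rw [e, hS, sq, Finset.sum_mul_sum, Finset.sum_mul]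
    rw [Finset.sum_comm' (t' := Finset.univ) (s' := fun _ => Finset.univ) (by simp)]
    conv_rhs => rw [Finset.sum_comm' (t' := Finset.univ) (s' := fun _ => Finset.univ) (by simp)]
    conv_lhs => rw [Finset.sum_comm' (t' := Finset.univ) (s' := fun _ => Finset.univ) (by simp)]
    refine Finset.sum_congr rfl fun I _ => ?_
    rw [Finset.sum_comm]
    refine Finset.sum_congr rfl fun J _ => ?_
    refine Finset.sum_congr rfl fun K _ => ?_
    ring
  have h2 : T I = ∑ K : Fin n → κ, (∏ s, M (I s) (K s)) * S K := by
    simp_rw [hS, Finset.mul_sum]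
    rw [Finset.sum_comm]
    simp_rw [← mul_assoc, ← Finset.sum_mul, ← Finset.prod_mul_distrib]
    have e : ∀ J : Fin n → Fin 2, ∑ K : Fin n → κ, ∏ s, M (I s) (K s) * B (K s) (J s)
        = if I = J then 1 else 0 := by
      intro J
      rw [← Fintype.prod_sum (fun s K => M (I s) K * B K (J s))]
      simp_rw [hM]
      rw [Finset.prod_ite_zero]
      simp [funext_iff]
    simp_rw [e]
    simp
  have hc' : ∀ K : Fin n → κ, (∏ s, M (I s) (K s)) ^ 2 ≤ (c ^ n) ^ 2 := by
    intro K
    rw [sq_le_sq, Finset.abs_prod]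
    refine le_trans ?_ (le_abs_self _)
    refine (Finset.prod_le_prod (fun _ _ => abs_nonneg _) (fun s _ => hc (I s) (K s))).trans ?_
    simp
  rw [h1, h2]
  refine (Finset.sum_mul_sq_le_sq_mul_sq _ _ _).trans ?_
  apply mul_le_mul_of_nonneg_right _ (by positivity)
  refine (Finset.sum_le_card_nsmul _ _ _ (fun K _ => hc' K)).trans ?_
  rw [nsmul_eq_mul, mul_comm]
  rfl

lemma nCov2_eq (F : (Fin 2 → ℝ) → (Fin 2 ⊕ Fin m → ℝ)) (l : ℕ) (x : Fin 2 → ℝ) :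
    nCov2 F l x = ∑ A, ∑ I, ∑ J, (∏ s, (gmet F x)⁻¹ (I s) (J s)) *
      (covIter F l x I A * covIter F l x J A) := by
  unfold nCov2 dotA
  simp_rw [Finset.mul_sum]
  conv_rhs => rw [Finset.sum_comm]
  refine Finset.sum_congr rfl fun I _ => ?_
  rw [Finset.sum_comm]

lemma ginv_symm (F : (Fin 2 → ℝ) → (Fin 2 ⊕ Fin m → ℝ)) (x : Fin 2 → ℝ) (i j : Fin 2) :
    (gmet F x)⁻¹ i j = (gmet F x)⁻¹ j i := by
  have h : (gmet F x).transpose = gmet F x := by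
    ext a b; exact gmet_symm F x b a
  conv_lhs => rw [← h, ← Matrix.transpose_nonsing_inv]
  rfl

lemma ginv_mul {F : (Fin 2 → ℝ) → (Fin 2 ⊕ Fin m → ℝ)} {x : Fin 2 → ℝ}
    (hdet : 1 ≤ (gmet F x).det) (i j : Fin 2) :
    ∑ k, (gmet F x)⁻¹ i k * gmet F x k j = if i = j then 1 else 0 := by
  have hu : IsUnit (gmet F x).det := by
    rw [isUnit_iff_ne_zero]; positivity
  have := congrFun (congrFun (Matrix.nonsing_inv_mul (gmet F x) hu) i) j
  rw [Matrix.mul_apply, Matrix.one_apply] at this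
  exact this

lemma mul_ginv {F : (Fin 2 → ℝ) → (Fin 2 ⊕ Fin m → ℝ)} {x : Fin 2 → ℝ}
    (hdet : 1 ≤ (gmet F x).det) (i j : Fin 2) :
    ∑ k, gmet F x i k * (gmet F x)⁻¹ k j = if i = j then 1 else 0 := by
  have hu : IsUnit (gmet F x).det := by
    rw [isUnit_iff_ne_zero]; positivity
  have := congrFun (congrFun (Matrix.mul_nonsing_inv (gmet F x) hu) i) j
  rw [Matrix.mul_apply, Matrix.one_apply] at this
  exact this

lemma cov_sq_le (hα : 0 ≤ α) (l : ℕ) : ∃ C : ℝ, 0 ≤ C ∧ ∀ u : (Fin 2 → ℝ) → (Fin m → ℝ),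
    Adm r α u → ∀ x ∈ Dr r, ∀ I A, covIter (gr u) l x I A ^ 2 ≤ C * nCov2 (gr u) l x := by
  choose c hc hb using fun (i : Fin 2) (A : Fin 2 ⊕ Fin m) =>
    (wt_pdgr (m := m) (r := r) (α := α) i A).bound hα
  set c0 := ∑ i, ∑ A, c i A with hc0
  have hc0' : ∀ i A, c i A ≤ c0 := by
    intro i A
    rw [hc0]
    refine le_trans ?_ (Finset.single_le_sum (f := fun i => ∑ A, c i A)
      (fun j _ => Finset.sum_nonneg fun A _ => hc j A) (Finset.mem_univ i))
    exact Finset.single_le_sum (f := fun A => c i A) (fun j _ => hc i j) (Finset.mem_univ A)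
  refine ⟨(c0 ^ (l+2)) ^ 2 * Fintype.card (Fin (l+2) → Fin 2 ⊕ Fin m), by positivity,
    fun u hu x hx I A => ?_⟩
  have hdet := det_ge hu.1 hx
  have key := fun A => tensor_lower (l+2) (fun i j => (gmet (gr u) x)⁻¹ i j)
    (fun K i => ∑ j, pd (gr u) j x K * (gmet (gr u) x)⁻¹ j i) (fun i K => pd (gr u) i x K) ?_ ?_ c0 ?_
    (fun I => covIter (gr u) l x I A)
  · refine (key A I).trans ?_
    apply mul_le_mul_of_nonneg_left _ (by positivity)
    rw [nCov2_eq]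
    refine Finset.single_le_sum (f := fun A => ∑ I, ∑ J, (∏ s, (gmet (gr u) x)⁻¹ (I s) (J s)) *
      (covIter (gr u) l x I A * covIter (gr u) l x J A)) (fun A' _ => ?_) (Finset.mem_univ A)
    by_contra hneg
    push Not at hneg
    have h1 := key A' I
    have h2 : 0 ≤ (c0 ^ (l+2)) ^ 2 * (Fintype.card (Fin (l+2) → Fin 2 ⊕ Fin m) : ℝ) := by positivity
    have h3 : 0 < (c0 ^ (l+2)) ^ 2 * (Fintype.card (Fin (l+2) → Fin 2 ⊕ Fin m) : ℝ) := by
      have : 0 < c0 := by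
        have h4 := hb 0 (Sum.inl 0) u hu x hx
        simp only [bd, if_true, mul_one] at h4
        rw [pd_gr hu.1 hx] at h4
        simp at h4
        have := hc0' 0 (Sum.inl 0)
        linarith
      positivity
    have h5 := mul_neg_of_pos_of_neg h3 hneg
    have h6 := sq_nonneg (covIter (gr u) l x I A')
    exact absurd (h6.trans h1) (not_le.2 h5)
  · intro i j
    have e : ∀ K, (∑ a, pd (gr u) a x K * (gmet (gr u) x)⁻¹ a i) *
        (∑ b, pd (gr u) b x K * (gmet (gr u) x)⁻¹ b j) =
        ∑ a, ∑ b, (gmet (gr u) x)⁻¹ i a * (pd (gr u) a x K * pd (gr u) b x K) *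
          (gmet (gr u) x)⁻¹ b j := by
      intro K
      rw [Finset.sum_mul_sum]
      refine Finset.sum_congr rfl fun a _ => Finset.sum_congr rfl fun b _ => ?_
      rw [ginv_symm _ _ i a]; ring
    simp_rw [e]
    rw [Finset.sum_comm]
    have e2 : ∀ a, ∑ K, ∑ b, (gmet (gr u) x)⁻¹ i a * (pd (gr u) a x K * pd (gr u) b x K) *
          (gmet (gr u) x)⁻¹ b j = (gmet (gr u) x)⁻¹ i a *
          ∑ b, gmet (gr u) x a b * (gmet (gr u) x)⁻¹ b j := by
      intro a
      rw [Finset.sum_comm, Finset.mul_sum]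
      refine Finset.sum_congr rfl fun b _ => ?_
      rw [← Finset.sum_mul, ← Finset.mul_sum, mul_assoc]
      rfl
    simp_rw [e2, mul_ginv hdet]
    simp
  · intro i j
    have e : ∑ K, pd (gr u) i x K * (∑ a, pd (gr u) a x K * (gmet (gr u) x)⁻¹ a j)
       = ∑ a, gmet (gr u) x i a * (gmet (gr u) x)⁻¹ a j := by
      simp_rw [Finset.mul_sum]
      rw [Finset.sum_comm]
      refine Finset.sum_congr rfl fun a _ => ?_
      show _ = (dotA (pd (gr u) i x) (pd (gr u) a x)) * _
      unfold dotA
      rw [Finset.sum_mul]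
      refine Finset.sum_congr rfl fun K _ => ?_
      ring
    rw [e, mul_ginv hdet]
  · intro i K
    have h4 := hb i K u hu x hx
    simp only [bd, if_true, mul_one] at h4
    exact h4.trans (hc0' i K)

/-- absolute sum of the components of the covariant derivatives -/
def SC (u : (Fin 2 → ℝ) → (Fin m → ℝ)) (l : ℕ) (x : Fin 2 → ℝ) : ℝ :=
  ∑ I, ∑ A, |covIter (gr u) l x I A|

lemma SC_nonneg (u : (Fin 2 → ℝ) → (Fin m → ℝ)) (l : ℕ) (x : Fin 2 → ℝ) : 0 ≤ SC u l x := by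
  unfold SC; positivity

lemma abs_le_SC (u : (Fin 2 → ℝ) → (Fin m → ℝ)) (l : ℕ) (x : Fin 2 → ℝ) (I A) :
    |covIter (gr u) l x I A| ≤ SC u l x := by
  unfold SC
  refine le_trans ?_ (Finset.single_le_sum (f := fun I => ∑ A, |covIter (gr u) l x I A|)
      (fun j _ => by positivity) (Finset.mem_univ I))
  exact Finset.single_le_sum (f := fun A => |covIter (gr u) l x I A|)
    (fun j _ => by positivity) (Finset.mem_univ A)

lemma nCov2_nonneg (hα : 0 ≤ α) (l : ℕ) {u : (Fin 2 → ℝ) → (Fin m → ℝ)} (hu : Adm r α u)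
    {x : Fin 2 → ℝ} (hx : x ∈ Dr r) : 0 ≤ nCov2 (gr u) l x := by
  obtain ⟨C, hC, h⟩ := cov_sq_le (m := m) (r := r) hα l
  by_contra hn
  push Not at hn
  have h1 : ∀ I A, covIter (gr u) l x I A = 0 := by
    intro I A
    have := h u hu x hx I A
    have h2 := mul_nonpos_of_nonneg_of_nonpos hC hn.le
    have h3 := sq_nonneg (covIter (gr u) l x I A)
    exact pow_eq_zero_iff (two_ne_zero) |>.1 (le_antisymm (this.trans h2) h3)
  rw [nCov2_eq] at hn
  simp [h1] at hn

lemma SC_le (hα : 0 ≤ α) (l : ℕ) : ∃ C : ℝ, 0 ≤ C ∧ ∀ u : (Fin 2 → ℝ) → (Fin m → ℝ),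
    Adm r α u → ∀ x ∈ Dr r, SC u l x ≤ C * √(nCov2 (gr u) l x) := by
  obtain ⟨C, hC, h⟩ := cov_sq_le (m := m) (r := r) hα l
  refine ⟨∑ I : Fin (l+2) → Fin 2, ∑ A : Fin 2 ⊕ Fin m, √C, by positivity, fun u hu x hx => ?_⟩
  unfold SC
  rw [Finset.sum_mul]
  refine Finset.sum_le_sum fun I _ => ?_
  rw [Finset.sum_mul]
  refine Finset.sum_le_sum fun A _ => ?_
  rw [← Real.sqrt_mul hC]
  exact Real.abs_le_sqrt (h u hu x hx I A)

lemma ginv_prod_le (hα : 0 ≤ α) (n : ℕ) : ∃ C : ℝ, 0 ≤ C ∧ ∀ u : (Fin 2 → ℝ) → (Fin m → ℝ),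
    Adm r α u → ∀ x ∈ Dr r, ∀ I J : Fin n → Fin 2, |∏ s, (gmet (gr u) x)⁻¹ (I s) (J s)| ≤ C := by
  choose c hc hb using fun (i j : Fin 2) => (wt_ginv (m := m) (r := r) (α := α) i j).bound hα
  set c0 := ∑ i, ∑ A, c i A with hc0
  have hc0' : ∀ i A, c i A ≤ c0 := by
    intro i A
    rw [hc0]
    refine le_trans ?_ (Finset.single_le_sum (f := fun i => ∑ A, c i A)
      (fun j _ => Finset.sum_nonneg fun A _ => hc j A) (Finset.mem_univ i))
    exact Finset.single_le_sum (f := fun A => c i A) (fun j _ => hc i j) (Finset.mem_univ A)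
  have hp : 0 ≤ c0 := Finset.sum_nonneg fun i _ => Finset.sum_nonneg fun j _ => hc i j
  refine ⟨c0 ^ n, by positivity, fun u hu x hx I J => ?_⟩
  rw [Finset.abs_prod]
  refine (Finset.prod_le_prod (g := fun _ => c0) (fun _ _ => abs_nonneg _) (fun s _ => ?_)).trans ?_
  · have h4 := hb (I s) (J s) u hu x hx
    simp only [bd, if_true, mul_one] at h4
    exact h4.trans (hc0' _ _)
  · simp

/-- pairing bound -/
lemma pair_le (hα : 0 ≤ α) (n : ℕ) : ∃ C : ℝ, 0 ≤ C ∧ ∀ u : (Fin 2 → ℝ) → (Fin m → ℝ),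
    Adm r α u → ∀ x ∈ Dr r, ∀ (S T : (Fin n → Fin 2) → Fin 2 ⊕ Fin m → ℝ) (s t : ℝ),
    0 ≤ s → 0 ≤ t → (∀ I A, |S I A| ≤ s) → (∀ I A, |T I A| ≤ t) →
    |∑ I, ∑ J, (∏ s, (gmet (gr u) x)⁻¹ (I s) (J s)) * dotA (S I) (T J)| ≤ C * (s * t) := by
  obtain ⟨C, hC, h⟩ := ginv_prod_le (m := m) (r := r) hα n
  refine ⟨∑ I : Fin n → Fin 2, ∑ J : Fin n → Fin 2, C * ∑ A : Fin 2 ⊕ Fin m, 1, by positivity,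
    fun u hu x hx S T s t hs ht hS hT => ?_⟩
  rw [Finset.sum_mul]
  refine (Finset.abs_sum_le_sum_abs _ _).trans (Finset.sum_le_sum fun I _ => ?_)
  rw [Finset.sum_mul]
  refine (Finset.abs_sum_le_sum_abs _ _).trans (Finset.sum_le_sum fun J _ => ?_)
  rw [abs_mul, mul_assoc]
  refine mul_le_mul (h u hu x hx I J) ?_ (abs_nonneg _) hC
  rw [Finset.sum_mul]
  refine (Finset.abs_sum_le_sum_abs _ _).trans (Finset.sum_le_sum fun A _ => ?_)
  rw [abs_mul, one_mul]
  exact mul_le_mul (hS I A) (hT J A) (abs_nonneg _) hs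

lemma nCov2_le (hα : 0 ≤ α) (l : ℕ) : ∃ C : ℝ, 0 ≤ C ∧ ∀ u : (Fin 2 → ℝ) → (Fin m → ℝ),
    Adm r α u → ∀ x ∈ Dr r, nCov2 (gr u) l x ≤ C * SC u l x ^ 2 := by
  obtain ⟨C, hC, h⟩ := pair_le (m := m) (r := r) hα (l+2)
  refine ⟨C, hC, fun u hu x hx => ?_⟩
  rw [sq]
  exact (le_abs_self _).trans (h u hu x hx _ _ _ _ (SC_nonneg u l x) (SC_nonneg u l x)
    (abs_le_SC u l x) (abs_le_SC u l x))

/-- size of derivatives of order exactly `l` -/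
def QQ (u : (Fin 2 → ℝ) → (Fin m → ℝ)) (l : ℕ) (x : Fin 2 → ℝ) : ℝ :=
  ∑ I : Fin l → Fin 2, ∑ a, |pdIter u l x I a|

lemma QQ_nonneg (u : (Fin 2 → ℝ) → (Fin m → ℝ)) (l : ℕ) (x : Fin 2 → ℝ) : 0 ≤ QQ u l x := by
  unfold QQ; positivity

lemma abs_le_QQ (u : (Fin 2 → ℝ) → (Fin m → ℝ)) (l : ℕ) (x : Fin 2 → ℝ) (I A) :
    |pdIter u l x I A| ≤ QQ u l x := by
  unfold QQ
  refine le_trans ?_ (Finset.single_le_sum (f := fun I => ∑ A, |pdIter u l x I A|)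
      (fun j _ => by positivity) (Finset.mem_univ I))
  exact Finset.single_le_sum (f := fun A => |pdIter u l x I A|)
    (fun j _ => by positivity) (Finset.mem_univ A)

lemma SC_sub_le (hα : 0 ≤ α) (l : ℕ) : ∃ C : ℝ, 0 ≤ C ∧ ∀ u : (Fin 2 → ℝ) → (Fin m → ℝ),
    Adm r α u → ∀ x ∈ Dr r, ∀ I A, |covIter (gr u) l x I A - nproj (gr u) x (vv u (l+2) I x) A|
      ≤ C * bd (l+1) (RR l u x) := by
  choose c hc hb using fun (I : Fin (l+2) → Fin 2) (A : Fin 2 ⊕ Fin m) =>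
    (wt_cov_aux (m := m) (r := r) (α := α) l I A).bound hα
  set c0 := ∑ i, ∑ A, c i A with hc0
  have hc0' : ∀ i A, c i A ≤ c0 := by
    intro i A
    rw [hc0]
    refine le_trans ?_ (Finset.single_le_sum (f := fun i => ∑ A, c i A)
      (fun j _ => Finset.sum_nonneg fun A _ => hc j A) (Finset.mem_univ i))
    exact Finset.single_le_sum (f := fun A => c i A) (fun j _ => hc i j) (Finset.mem_univ A)
  have hp : 0 ≤ c0 := Finset.sum_nonneg fun i _ => Finset.sum_nonneg fun j _ => hc i j
  refine ⟨c0, hp, fun u hu x hx I A => ?_⟩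
  exact (hb I A u hu x hx).trans
    (mul_le_mul_of_nonneg_right (hc0' I A) (bd_nonneg _ (RR_nonneg _ _ _)))

lemma nproj_le (hα : 0 ≤ α) : ∃ C : ℝ, 0 ≤ C ∧ ∀ u : (Fin 2 → ℝ) → (Fin m → ℝ),
    Adm r α u → ∀ x ∈ Dr r, ∀ (v : Fin 2 ⊕ Fin m → ℝ) (t : ℝ), (∀ A, |v A| ≤ t) →
      ∀ A, |nproj (gr u) x v A| ≤ C * t := by
  choose c hc hb using fun (A B : Fin 2 ⊕ Fin m) =>
    (wt_PI (m := m) (r := r) (α := α) A B).bound hα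
  refine ⟨∑ A, ∑ B, c A B, Finset.sum_nonneg fun i _ => Finset.sum_nonneg fun j _ => hc i j,
    fun u hu x hx v t hv A => ?_⟩
  have ht : 0 ≤ t := (abs_nonneg _).trans (hv A)
  have h1 : |nproj (gr u) x v A| ≤ (∑ B, c A B) * t := by
    rw [nproj_apply, Finset.sum_mul]
    refine (Finset.abs_sum_le_sum_abs _ _).trans (Finset.sum_le_sum fun B _ => ?_)
    rw [abs_mul]
    have h4 := hb A B u hu x hx
    simp only [bd, if_true, mul_one] at h4
    exact mul_le_mul h4 (hv B) (abs_nonneg _) (hc A B)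
  refine h1.trans (mul_le_mul_of_nonneg_right ?_ ht)
  exact Finset.single_le_sum (f := fun A => ∑ B, c A B)
      (fun j _ => Finset.sum_nonneg fun A _ => hc j A) (Finset.mem_univ A)

/-- upper bound for the covariant derivatives in terms of the derivatives of `u` -/
lemma SC_upper (hα : 0 ≤ α) (l : ℕ) : ∃ C : ℝ, 0 ≤ C ∧ ∀ u : (Fin 2 → ℝ) → (Fin m → ℝ),
    Adm r α u → ∀ x ∈ Dr r, SC u l x ≤ C * (QQ u (l+2) x + bd (l+1) (RR l u x)) := by
  obtain ⟨C1, hC1, h1⟩ := SC_sub_le (m := m) (r := r) hα l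
  obtain ⟨C2, hC2, h2⟩ := nproj_le (m := m) (r := r) hα
  refine ⟨∑ I : Fin (l+2) → Fin 2, ∑ A : Fin 2 ⊕ Fin m, (C1 + C2), by positivity,
    fun u hu x hx => ?_⟩
  unfold SC
  rw [Finset.sum_mul]
  refine Finset.sum_le_sum fun I _ => ?_
  rw [Finset.sum_mul]
  refine Finset.sum_le_sum fun A _ => ?_
  have h3 := h1 u hu x hx I A
  have h4 := h2 u hu x hx (vv u (l+2) I x) (QQ u (l+2) x) (by
    rintro (j | a)
    · simp [vv, QQ_nonneg]
    · exact abs_le_QQ u (l+2) x I a) A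
  have h5 := bd_nonneg (l+1) (RR_nonneg l u x)
  have h6 := QQ_nonneg u (l+2) x
  have h7 : |covIter (gr u) l x I A| ≤ |covIter (gr u) l x I A - nproj (gr u) x (vv u (l+2) I x) A|
      + |nproj (gr u) x (vv u (l+2) I x) A| := by
    have := abs_add_le (covIter (gr u) l x I A - nproj (gr u) x (vv u (l+2) I x) A)
      (nproj (gr u) x (vv u (l+2) I x) A)
    simpa using this
  nlinarith [mul_nonneg hC1 h6, mul_nonneg hC2 h5]

lemma vert_rec {u : (Fin 2 → ℝ) → (Fin m → ℝ)} (hu : Adm r α u) {x : Fin 2 → ℝ} (hx : x ∈ Dr r)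
    (l : ℕ) (I : Fin l → Fin 2) (a : Fin m) : pdIter u l x I a =
      nproj (gr u) x (vv u l I x) (Sum.inr a) -
      ∑ k, nproj (gr u) x (vv u l I x) (Sum.inl k) * fderiv ℝ u x (Pi.single k 1) a := by
  obtain ⟨c, hc⟩ : ∃ c : Fin 2 → ℝ, nproj (gr u) x (vv u l I x) =
      vv u l I x - ∑ k, c k • pd (gr u) k x :=
    ⟨fun k => ∑ p, (gmet (gr u) x)⁻¹ k p * dotA (vv u l I x) (pd (gr u) p x), by
      unfold nproj
      simp_rw [Finset.sum_smul]⟩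
  rw [hc]
  simp only [pd_gr hu.1 hx, Fin.sum_univ_two]
  simp [vv, pdIter]
  ring

/-- derivatives of `u` are controlled by the covariant derivatives and lower derivatives -/
lemma QQ_upper (hα : 0 ≤ α) (l : ℕ) : ∃ C : ℝ, 0 ≤ C ∧ ∀ u : (Fin 2 → ℝ) → (Fin m → ℝ),
    Adm r α u → ∀ x ∈ Dr r, QQ u (l+2) x ≤ C * (√(nCov2 (gr u) l x) + bd (l+1) (RR l u x)) := by
  obtain ⟨C1, hC1, h1⟩ := SC_sub_le (m := m) (r := r) hα l
  obtain ⟨C2, hC2, h2⟩ := SC_le (m := m) (r := r) hα l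
  refine ⟨∑ I : Fin (l+2) → Fin 2, ∑ A : Fin m, ((1 + 2 * α) * (C1 + C2)), by positivity,
    fun u hu x hx => ?_⟩
  unfold QQ
  rw [Finset.sum_mul]
  refine Finset.sum_le_sum fun I _ => ?_
  rw [Finset.sum_mul]
  refine Finset.sum_le_sum fun a _ => ?_
  have h5 := bd_nonneg (l+1) (RR_nonneg l u x)
  have h6 := Real.sqrt_nonneg (nCov2 (gr u) l x)
  have hN : ∀ A, |nproj (gr u) x (vv u (l+2) I x) A| ≤
      (C1 + C2) * (√(nCov2 (gr u) l x) + bd (l+1) (RR l u x)) := by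
    intro A
    have h3 := h1 u hu x hx I A
    have h4 := (abs_le_SC u l x I A).trans (h2 u hu x hx)
    have h7 := abs_sub (covIter (gr u) l x I A)
      (covIter (gr u) l x I A - nproj (gr u) x (vv u (l+2) I x) A)
    rw [sub_sub_cancel] at h7
    nlinarith [mul_nonneg hC1 h6, mul_nonneg hC2 h5]
  set Z := (C1 + C2) * (√(nCov2 (gr u) l x) + bd (l+1) (RR l u x)) with hZ
  have hZ0 : 0 ≤ Z := by positivity
  rw [mul_assoc, ← hZ, vert_rec hu hx, Fin.sum_univ_two]
  have hm : ∀ k, |nproj (gr u) x (vv u (l+2) I x) (Sum.inl k) * fderiv ℝ u x (Pi.single k 1) a|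
      ≤ Z * α := by
    intro k
    rw [abs_mul]
    exact mul_le_mul (hN _) (du_le hα hu hx k a) (abs_nonneg _) hZ0
  have hm0 := abs_le.1 (hm 0)
  have hm1 := abs_le.1 (hm 1)
  have hh := abs_le.1 (hN (Sum.inr a))
  rw [abs_le]
  constructor <;> nlinarith

end Stmt17

namespace Stmt17
open MeasureTheory Set

variable {m : ℕ} {r α : ℝ}

/-- reindexing involution -/
def swapE (n : ℕ) (a : Fin n) : Equiv.Perm ((Fin n → Fin 2) × Fin 2) :=
  Function.Involutive.toPerm (fun p => (Function.update p.1 a p.2, p.1 a)) (by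
    rintro ⟨I, k⟩
    simp)

lemma alg_claim (n : ℕ) (H : Fin 2 → Fin 2 → ℝ) (G : Fin 2 → Fin 2 → ℝ)
    (E : (Fin n → Fin 2) → ℝ) (J : Fin n → Fin 2) (a : Fin n) :
    ∑ I : Fin n → Fin 2, (∏ s ∈ Finset.univ.erase a, H (I s) (J s)) *
      (∑ k, G k (I a) * H k (J a)) * E I =
    ∑ I : Fin n → Fin 2, (∏ s, H (I s) (J s)) * ∑ k, G (I a) k * E (Function.update I a k) := by
  simp_rw [Finset.mul_sum, Finset.sum_mul]
  rw [← Fintype.sum_prod_type', ← Fintype.sum_prod_type']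
  refine Fintype.sum_equiv (swapE n a) _ _ ?_
  rintro ⟨I, k⟩
  show _ = (∏ s, H (Function.update I a k s) (J s)) *
    (G (Function.update I a k a) (I a) * E (Function.update (Function.update I a k) a (I a)))
  rw [← Finset.mul_prod_erase _ _ (Finset.mem_univ a)]
  have e : ∏ s ∈ Finset.univ.erase a, H (Function.update I a k s) (J s)
      = ∏ s ∈ Finset.univ.erase a, H (I s) (J s) := by
    refine Finset.prod_congr rfl fun s hs => ?_
    rw [Function.update_of_ne (Finset.ne_of_mem_erase hs)]
  rw [e]
  simp
  ring

lemma alg_compat (n : ℕ) (H dH : Fin 2 → Fin 2 → ℝ) (G : Fin 2 → Fin 2 → ℝ)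
    (hH : ∀ i j, H i j = H j i)
    (hd : ∀ p q, dH p q = - ∑ k, G k p * H k q - ∑ k, G k q * H k p)
    (E : (Fin n → Fin 2) → (Fin n → Fin 2) → ℝ) (hE : ∀ I J, E I J = E J I) :
    ∑ I, ∑ J, (∑ a, (∏ s ∈ Finset.univ.erase a, H (I s) (J s)) * dH (I a) (J a)) * E I J
     = - 2 * ∑ I, ∑ J, (∏ s, H (I s) (J s)) * ∑ a, ∑ k, G (I a) k * E (Function.update I a k) J := by
  set X := ∑ I, ∑ J, (∏ s, H (I s) (J s)) * ∑ a, ∑ k, G (I a) k * E (Function.update I a k) J with hX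
  have h1 : ∑ I, ∑ J, ∑ a, (∏ s ∈ Finset.univ.erase a, H (I s) (J s)) *
      (∑ k, G k (I a) * H k (J a)) * E I J = X := by
    rw [hX, Finset.sum_comm]
    conv_rhs => rw [Finset.sum_comm]
    refine Finset.sum_congr rfl fun J _ => ?_
    rw [Finset.sum_comm]
    simp_rw [Finset.mul_sum (Finset.univ : Finset (Fin n))]
    conv_rhs => rw [Finset.sum_comm]
    refine Finset.sum_congr rfl fun a _ => ?_
    exact alg_claim n H G (fun I => E I J) J a
  have h2 : ∑ I, ∑ J, ∑ a, (∏ s ∈ Finset.univ.erase a, H (I s) (J s)) *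
      (∑ k, G k (J a) * H k (I a)) * E I J = X := by
    rw [← h1, Finset.sum_comm]
    refine Finset.sum_congr rfl fun J _ => Finset.sum_congr rfl fun I _ => ?_
    refine Finset.sum_congr rfl fun a _ => ?_
    rw [hE I J]
    simp_rw [hH (I _) (J _)]
  have h3 : ∑ I, ∑ J, (∑ a, (∏ s ∈ Finset.univ.erase a, H (I s) (J s)) * dH (I a) (J a)) * E I J
      = - (∑ I, ∑ J, ∑ a, (∏ s ∈ Finset.univ.erase a, H (I s) (J s)) *
      (∑ k, G k (I a) * H k (J a)) * E I J) - ∑ I, ∑ J, ∑ a, (∏ s ∈ Finset.univ.erase a, H (I s) (J s)) *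
      (∑ k, G k (J a) * H k (I a)) * E I J := by
    simp only [← Finset.sum_neg_distrib, ← Finset.sum_sub_distrib]
    refine Finset.sum_congr rfl fun J _ => Finset.sum_congr rfl fun I _ => ?_
    rw [Finset.sum_mul]
    refine Finset.sum_congr rfl fun a _ => ?_
    rw [hd]
    ring
  rw [h3, h1, h2]
  ring

lemma dd_dotA {f g : (Fin 2 → ℝ) → (Fin 2 ⊕ Fin m → ℝ)} {x : Fin 2 → ℝ} (i : Fin 2)
    (hf : DifferentiableAt ℝ f x) (hg : DifferentiableAt ℝ g x) :
    dd i (fun y => dotA (f y) (g y)) x = dotA (pd f i x) (g x) + dotA (f x) (pd g i x) := by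
  unfold dotA
  have d1 := differentiableAt_pi.1 hf
  have d2 := differentiableAt_pi.1 hg
  rw [dd_sum (f := fun A y => f y A * g y A) _ _ (fun A _ => (d1 A).mul (d2 A)),
    ← Finset.sum_add_distrib]
  refine Finset.sum_congr rfl fun A _ => ?_
  rw [dd_mul _ (d1 A) (d2 A), pd_apply hf, pd_apply hg]

lemma dd_prod {ι : Type*} [DecidableEq ι] (s : Finset ι) {f : ι → (Fin 2 → ℝ) → ℝ} {x : Fin 2 → ℝ}
    (i : Fin 2) (hf : ∀ k ∈ s, DifferentiableAt ℝ (f k) x) :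
    dd i (fun y => ∏ k ∈ s, f k y) x = ∑ a ∈ s, (∏ k ∈ s.erase a, f k x) * dd i (f a) x := by
  unfold dd
  have h := HasFDerivAt.finsetProd (u := s) (g := f) (g' := fun k => fderiv ℝ (f k) x) (x := x)
    (fun k hk => (hf k hk).hasFDerivAt)
  have h2 : HasFDerivAt (fun y => ∏ k ∈ s, f k y)
    (∑ a ∈ s, (∏ k ∈ s.erase a, f k x) • fderiv ℝ (f a) x) x := by
    convert h using 1
  rw [h2.fderiv]
  simp

lemma dd_ginv {u : (Fin 2 → ℝ) → (Fin m → ℝ)} (hu : Adm r α u) {x : Fin 2 → ℝ} (hx : x ∈ Dr r)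
    (i p q : Fin 2) : dd i (fun y => (gmet (gr u) y)⁻¹ p q) x =
      - ∑ k, chr (gr u) i k p x * (gmet (gr u) x)⁻¹ k q
      - ∑ k, chr (gr u) i k q x * (gmet (gr u) x)⁻¹ k p := by
  have hdet := det_ge hu.1 hx
  set H := fun p q => (gmet (gr u) x)⁻¹ p q with hH
  set s := fun a b => dotA (pd (pd (gr u) i) a x) (pd (gr u) b x) with hs
  have hg : ∀ a b, dd i (fun y => gmet (gr u) y a b) x = s a b + s b a := by
    intro a b
    show dd i (fun y => dotA (pd (gr u) a y) (pd (gr u) b y)) x = _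
    rw [dd_dotA i (smooth_diffAt ((wt_pdgr a).smooth hu) hx)
      (smooth_diffAt ((wt_pdgr b).smooth hu) hx)]
    rw [pd_symm (smooth_gr hu.1) hx a i, pd_symm (smooth_gr hu.1) hx b i, hs,
      dotA_comm (pd (gr u) a x)]
  have hz : ∀ a q, ∑ b, ((s a b + s b a) * H b q + gmet (gr u) x a b *
      dd i (fun y => (gmet (gr u) y)⁻¹ b q) x) = 0 := by
    intro a q
    have h1 : dd i (fun y => ∑ b, gmet (gr u) y a b * (gmet (gr u) y)⁻¹ b q) x = 0 := by
      rw [dd_congr (g := fun y => if a = q then 1 else 0)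
        (fun y hy => mul_ginv (det_ge hu.1 hy) a q) i hx]
      simp [dd]
    have d1 : ∀ b, DifferentiableAt ℝ (fun y => gmet (gr u) y a b) x :=
      fun b => (wt_gmet a b).diffAt hu hx
    have d2 : ∀ b, DifferentiableAt ℝ (fun y => (gmet (gr u) y)⁻¹ b q) x :=
      fun b => (wt_ginv b q).diffAt hu hx
    rw [dd_sum (f := fun b y => gmet (gr u) y a b * (gmet (gr u) y)⁻¹ b q) _ _
      (fun b _ => (d1 b).mul (d2 b))] at h1
    rw [← h1]
    refine Finset.sum_congr rfl fun b _ => ?_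
    rw [dd_mul i (d1 b) (d2 b), hg]
  have hsym : ∀ a b, H a b = H b a := fun a b => ginv_symm _ _ a b
  have hi := fun b => ginv_mul hdet p b
  have c1 : ∀ k p, chr (gr u) i k p x = ∑ l, H p l * s k l := fun k p => rfl
  simp_rw [c1]
  have z0 := hz 0 q
  have z1 := hz 1 q
  have i0 := hi 0
  have i1 := hi 1
  simp only [Fin.sum_univ_two] at *
  change H p 0 * _ + H p 1 * _ = _ at i0
  change H p 0 * _ + H p 1 * _ = _ at i1
  change _ = -((_) * H 0 q + (_) * H 1 q) - ((_) * H 0 p + (_) * H 1 p)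
  set D := fun b => dd i (fun y => (gmet (gr u) y)⁻¹ b q) x with hD
  change (_ + _ * D 0) + (_ + _ * D 1) = 0 at z0
  change (_ + _ * D 0) + (_ + _ * D 1) = 0 at z1
  have hp : D p = (H p 0 * gmet (gr u) x 0 0 + H p 1 * gmet (gr u) x 1 0) * D 0 +
    (H p 0 * gmet (gr u) x 0 1 + H p 1 * gmet (gr u) x 1 1) * D 1 := by
    rw [i0, i1]
    fin_cases p <;> simp
  change D p = _
  rw [hp, hsym q 0, hsym q 1, hsym 0 p, hsym 1 p]
  linear_combination H p 0 * z0 + H p 1 * z1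

/-- differentiating the squared norm -/
lemma dd_nCov2 {u : (Fin 2 → ℝ) → (Fin m → ℝ)} (hu : Adm r α u) {x : Fin 2 → ℝ} (hx : x ∈ Dr r)
    (l : ℕ) (i : Fin 2) : dd i (nCov2 (gr u) l) x = 2 *
      ∑ I, ∑ J, (∏ s, (gmet (gr u) x)⁻¹ (I s) (J s)) *
        dotA (covIter (gr u) (l+1) x (Fin.cons i I)) (covIter (gr u) l x J) := by
  have dT : ∀ I, DifferentiableAt ℝ (fun y => covIter (gr u) l y I) x :=
    fun I => smooth_diffAt ((wt_cov l I).smooth hu) hx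
  have dE : ∀ I J, DifferentiableAt ℝ
      (fun y => dotA (covIter (gr u) l y I) (covIter (gr u) l y J)) x :=
    fun I J => (wt_dot (wt_cov l I) (wt_cov l J) rfl).diffAt hu hx
  have dH : ∀ p q, DifferentiableAt ℝ (fun y => (gmet (gr u) y)⁻¹ p q) x :=
      fun p q => (wt_ginv p q).diffAt hu hx
  have dP : ∀ I J : Fin (l+2) → Fin 2, DifferentiableAt ℝ
      (fun y => ∏ s, (gmet (gr u) y)⁻¹ (I s) (J s)) x := by
    intro I J
    have := HasFDerivAt.finsetProd (u := Finset.univ)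
      (g := fun s y => (gmet (gr u) y)⁻¹ (I s) (J s))
      (g' := fun s => fderiv ℝ (fun y => (gmet (gr u) y)⁻¹ (I s) (J s)) x) (x := x)
      (fun k hk => (dH _ _).hasFDerivAt)
    convert this.differentiableAt using 1
  have e1 : dd i (nCov2 (gr u) l) x = ∑ I, ∑ J, ((∑ a, (∏ s ∈ Finset.univ.erase a,
      (gmet (gr u) x)⁻¹ (I s) (J s)) * dd i (fun y => (gmet (gr u) y)⁻¹ (I a) (J a)) x) *
        dotA (covIter (gr u) l x I) (covIter (gr u) l x J) +
      (∏ s, (gmet (gr u) x)⁻¹ (I s) (J s)) *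
      (dotA (pd (fun y => covIter (gr u) l y I) i x) (covIter (gr u) l x J) +
       dotA (covIter (gr u) l x I) (pd (fun y => covIter (gr u) l y J) i x))) := by
    unfold nCov2
    rw [dd_sum (f := fun I y => ∑ J, (∏ s, (gmet (gr u) y)⁻¹ (I s) (J s)) *
      dotA (covIter (gr u) l y I) (covIter (gr u) l y J))]
    · refine Finset.sum_congr rfl fun I _ => ?_
      rw [dd_sum (f := fun J y => (∏ s, (gmet (gr u) y)⁻¹ (I s) (J s)) *
        dotA (covIter (gr u) l y I) (covIter (gr u) l y J)) _ _
        (fun J _ => (dP I J).mul (dE I J))]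
      refine Finset.sum_congr rfl fun J _ => ?_
      rw [dd_mul _ (dP I J) (dE I J), dd_dotA _ (dT I) (dT J),
        dd_prod (f := fun s y => (gmet (gr u) y)⁻¹ (I s) (J s)) _ _ (fun s _ => dH _ _)]
    · intro I _
      exact DifferentiableAt.fun_sum (fun J _ => (dP I J).mul (dE I J))
  have e2 : ∀ I J, dotA (pd (fun y => covIter (gr u) l y I) i x) (covIter (gr u) l x J) =
      dotA (covIter (gr u) (l+1) x (Fin.cons i I)) (covIter (gr u) l x J) +
      ∑ a, ∑ k, chr (gr u) i (I a) k x *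
        dotA (covIter (gr u) l x (Function.update I a k)) (covIter (gr u) l x J) := by
    intro I J
    have e3 : covIter (gr u) (l+1) x (Fin.cons i I) =
      nproj (gr u) x (pd (fun y => covIter (gr u) l y I) i x)
      - ∑ a, ∑ k : Fin 2, chr (gr u) i (I a) k x • covIter (gr u) l x (Function.update I a k) := rfl
    have hn := Nrm_cov hu l hx J
    rw [e3, dotA_sub_left, dotA_sum_left]
    simp_rw [dotA_sum_left, dotA_smul_left]
    rw [sub_add_cancel]
    unfold nproj
    rw [dotA_sub_left, dotA_sum_left]
    simp_rw [dotA_sum_left, dotA_smul_left]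
    have : ∀ k, dotA (pd (gr u) k x) (covIter (gr u) l x J) = 0 := by
      intro k; rw [dotA_comm]; exact hn k
    simp [this]
  have e4 := alg_compat (l+2) (fun p q => (gmet (gr u) x)⁻¹ p q)
    (fun p q => dd i (fun y => (gmet (gr u) y)⁻¹ p q) x) (fun j k => chr (gr u) i j k x)
    (fun p q => ginv_symm _ _ p q) (fun p q => dd_ginv hu hx i p q)
    (fun I J => dotA (covIter (gr u) l x I) (covIter (gr u) l x J)) (fun I J => dotA_comm _ _)
  have e5 : ∑ I, ∑ J, (∏ s, (gmet (gr u) x)⁻¹ (I s) (J s)) *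
       dotA (covIter (gr u) l x I) (pd (fun y => covIter (gr u) l y J) i x) =
      ∑ I, ∑ J, (∏ s, (gmet (gr u) x)⁻¹ (I s) (J s)) *
       dotA (pd (fun y => covIter (gr u) l y I) i x) (covIter (gr u) l x J) := by
    rw [Finset.sum_comm]
    refine Finset.sum_congr rfl fun I _ => Finset.sum_congr rfl fun J _ => ?_
    rw [dotA_comm]
    simp_rw [ginv_symm (gr u) x (J _) (I _)]
  have e6 : ∑ I, ∑ J, (∏ s, (gmet (gr u) x)⁻¹ (I s) (J s)) *
       dotA (pd (fun y => covIter (gr u) l y I) i x) (covIter (gr u) l x J) =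
      ∑ I, ∑ J, (∏ s, (gmet (gr u) x)⁻¹ (I s) (J s)) *
        dotA (covIter (gr u) (l+1) x (Fin.cons i I)) (covIter (gr u) l x J) +
      ∑ I, ∑ J, (∏ s, (gmet (gr u) x)⁻¹ (I s) (J s)) *
      ∑ a, ∑ k, chr (gr u) i (I a) k x *
        dotA (covIter (gr u) l x (Function.update I a k)) (covIter (gr u) l x J) := by
    simp only [← Finset.sum_add_distrib]
    refine Finset.sum_congr rfl fun I _ => Finset.sum_congr rfl fun J _ => ?_
    rw [e2, mul_add]
  rw [e1]
  simp only [mul_add, Finset.sum_add_distrib] at *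
  rw [e4, e5, e6]
  ring

lemma wt_prod {ι : Type*} (s : Finset ι) {N : ℕ} {f : ι → _} (h : ∀ k ∈ s, Wt m r α N 0 (f k)) :
    Wt m r α N 0 (fun u x => ∏ k ∈ s, f k u x) := by
  classical
  induction s using Finset.induction_on with
  | empty => simpa using Wt.const 1
  | insert a s ha ih =>
    refine Wt.congr ((h a (by simp)).mul (ih (fun k hk => h k (by simp [hk]))) (rfl : 0 = 0 + 0))
      (fun u _ x _ => ?_)
    rw [Finset.prod_insert ha]

lemma wt_nCov2 (l : ℕ) : Wt m r α (l+1) (l+1+(l+1)) (fun u x => nCov2 (gr u) l x) := by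
  unfold nCov2
  refine Wt.sum _ fun I _ => Wt.sum _ fun J _ => ?_
  exact (wt_prod _ fun s _ => (wt_ginv (I s) (J s)).mono (Nat.zero_le _)).mul
    (wt_dot (wt_cov l I) (wt_cov l J) rfl) (by simp)

/-- Kato type function -/
def KK (u : (Fin 2 → ℝ) → (Fin m → ℝ)) (l : ℕ) (x : Fin 2 → ℝ) : ℝ := √(1 + nCov2 (gr u) l x)

lemma KK_smooth (hα : 0 ≤ α) {u : (Fin 2 → ℝ) → (Fin m → ℝ)} (hu : Adm r α u) (l : ℕ) :
    ContDiffOn ℝ (⊤ : ℕ∞) (KK u l) (Dr r) := by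
  unfold KK
  refine ContDiffOn.sqrt (contDiffOn_const.add ((wt_nCov2 l).smooth hu)) (fun x hx => ?_)
  have := nCov2_nonneg hα l hu hx
  positivity

lemma KK_grad (hα : 0 ≤ α) (l : ℕ) : ∃ C : ℝ, 0 ≤ C ∧ ∀ u : (Fin 2 → ℝ) → (Fin m → ℝ),
    Adm r α u → ∀ x ∈ Dr r, Gd (KK u l) x ≤ C * √(nCov2 (gr u) (l+1) x) := by
  obtain ⟨C1, hC1, h1⟩ := SC_le (m := m) (r := r) hα l
  obtain ⟨C2, hC2, h2⟩ := SC_le (m := m) (r := r) hα (l+1)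
  obtain ⟨C3, hC3, h3⟩ := pair_le (m := m) (r := r) hα (l+2)
  refine ⟨2 * (C3 * (C2 * C1)), by positivity, fun u hu x hx => ?_⟩
  have hp := nCov2_nonneg hα l hu hx
  have key : ∀ i, |dd i (KK u l) x| ≤ C3 * (C2 * C1) * √(nCov2 (gr u) (l+1) x) := by
    intro i
    have hd : DifferentiableAt ℝ (nCov2 (gr u) l) x := (wt_nCov2 l).diffAt hu hx
    have e : dd i (KK u l) x = dd i (nCov2 (gr u) l) x / (2 * √(1 + nCov2 (gr u) l x)) := by
      unfold dd KK
      rw [fderiv_sqrt (by fun_prop) (by positivity)]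
      rw [fderiv_const_add]
      simp
      ring
    have h4 := h3 u hu x hx (fun I => covIter (gr u) (l+1) x (Fin.cons i I))
      (covIter (gr u) l x) (SC u (l+1) x) (SC u l x) (SC_nonneg _ _ _) (SC_nonneg _ _ _)
      (fun I A => abs_le_SC u (l+1) x _ A) (fun I A => abs_le_SC u l x I A)
    rw [e, dd_nCov2 hu hx, abs_div, abs_of_pos (by positivity : 0 < 2 * √(1 + nCov2 (gr u) l x)),
      div_le_iff₀ (by positivity), abs_mul, abs_two]
    have h5 := h1 u hu x hx
    have h6 := h2 u hu x hx
    have h7 : √(nCov2 (gr u) l x) ≤ √(1 + nCov2 (gr u) l x) := Real.sqrt_le_sqrt (by linarith)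
    have h8 : SC u (l+1) x * SC u l x ≤
       (C2 * √(nCov2 (gr u) (l+1) x)) * (C1 * √(1 + nCov2 (gr u) l x)) :=
      mul_le_mul h6 (h5.trans (mul_le_mul_of_nonneg_left h7 hC1)) (SC_nonneg _ _ _) (by positivity)
    have h9 := mul_le_mul_of_nonneg_left h8 hC3
    linarith
  unfold Gd
  linarith [key 0, key 1]

end Stmt17

namespace Stmt17
open MeasureTheory Set

variable {m : ℕ} {r α : ℝ}

/-- uniform integral domination -/
def Dom (r : ℝ) (S : Set ((Fin 2 → ℝ) → (Fin m → ℝ))) (B : ((Fin 2 → ℝ) → (Fin m → ℝ)) → ENNReal)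
    (p : ℕ) (f : ((Fin 2 → ℝ) → (Fin m → ℝ)) → (Fin 2 → ℝ) → ℝ) : Prop :=
  (∀ u ∈ S, ContinuousOn (f u) (Dr r)) ∧ ∃ C : ENNReal, C ≠ ⊤ ∧ ∀ u ∈ S,
    ∫⁻ x in Dr r, ENNReal.ofReal (|f u x| ^ p) ≤ C * B u

variable {S : Set ((Fin 2 → ℝ) → (Fin m → ℝ))} {B : ((Fin 2 → ℝ) → (Fin m → ℝ)) → ENNReal} {p : ℕ}
  {f g : ((Fin 2 → ℝ) → (Fin m → ℝ)) → (Fin 2 → ℝ) → ℝ}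

lemma lint_mono {f g : (Fin 2 → ℝ) → ℝ} (h : ∀ x ∈ Dr r, f x ≤ g x) :
    ∫⁻ x in Dr r, ENNReal.ofReal (f x) ≤ ∫⁻ x in Dr r, ENNReal.ofReal (g x) :=
  setLIntegral_mono' (measSet_Dr r) fun x hx => ENNReal.ofReal_le_ofReal (h x hx)

lemma lint_const_mul {f : (Fin 2 → ℝ) → ℝ} {c : ℝ} (hc : 0 ≤ c) :
    ∫⁻ x in Dr r, ENNReal.ofReal (c * f x) = ENNReal.ofReal c * ∫⁻ x in Dr r, ENNReal.ofReal (f x) := by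
  simp_rw [ENNReal.ofReal_mul hc]
  rw [lintegral_const_mul' _ _ ENNReal.ofReal_ne_top]

lemma lint_add_le {f g : (Fin 2 → ℝ) → ℝ} (hf : ContinuousOn f (Dr r)) :
    ∫⁻ x in Dr r, ENNReal.ofReal (f x + g x) ≤
      (∫⁻ x in Dr r, ENNReal.ofReal (f x)) + ∫⁻ x in Dr r, ENNReal.ofReal (g x) := by
  rw [← lintegral_add_left' (aem (isOpen_Dr r) hf)]
  exact lintegral_mono fun x => ENNReal.ofReal_add_le

lemma Dom.le (hg : Dom r S B p g) (hc : ∀ u ∈ S, ContinuousOn (f u) (Dr r)) {c : ℝ} (hc0 : 0 ≤ c)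
    (h : ∀ u ∈ S, ∀ x ∈ Dr r, |f u x| ≤ c * |g u x|) : Dom r S B p f := by
  refine ⟨hc, ?_⟩
  obtain ⟨-, C, hC, hb⟩ := hg
  refine ⟨ENNReal.ofReal (c ^ p) * C, ENNReal.mul_ne_top ENNReal.ofReal_ne_top hC, fun u hu => ?_⟩
  rw [mul_assoc]
  refine le_trans ?_ (mul_le_mul_right (hb u hu) _)
  rw [← lint_const_mul (by positivity)]
  refine lint_mono fun x hx => ?_
  rw [← mul_pow]
  exact pow_le_pow_left₀ (abs_nonneg _) (h u hu x hx) p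

lemma Dom.add (hf : Dom r S B p f) (hg : Dom r S B p g) :
    Dom r S B p (fun u x => f u x + g u x) := by
  refine ⟨fun u hu => (hf.1 u hu).add (hg.1 u hu), ?_⟩
  obtain ⟨hcf, C, hC, hb⟩ := hf
  obtain ⟨-, C', hC', hb'⟩ := hg
  refine ⟨ENNReal.ofReal (2 ^ (p - 1)) * (C + C'),
    ENNReal.mul_ne_top ENNReal.ofReal_ne_top (ENNReal.add_ne_top.2 ⟨hC, hC'⟩), fun u hu => ?_⟩
  calc ∫⁻ x in Dr r, ENNReal.ofReal (|f u x + g u x| ^ p)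
      ≤ ∫⁻ x in Dr r, ENNReal.ofReal (2 ^ (p - 1) * (|f u x| ^ p + |g u x| ^ p)) := by
        refine lint_mono fun x hx => ?_
        exact (pow_le_pow_left₀ (abs_nonneg _) (abs_add_le _ _) p).trans
          (add_pow_le (abs_nonneg _) (abs_nonneg _) p)
    _ = ENNReal.ofReal (2 ^ (p - 1)) * ∫⁻ x in Dr r, ENNReal.ofReal (|f u x| ^ p + |g u x| ^ p) :=
        lint_const_mul (by positivity)
    _ ≤ ENNReal.ofReal (2 ^ (p - 1)) * (C * B u + C' * B u) := by
        gcongr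
        exact (lint_add_le (f := fun x => |f u x| ^ p) ((hcf u hu).abs.pow p)).trans (add_le_add (hb u hu) (hb' u hu))
    _ = _ := by ring

lemma Dom.sum {ι : Type*} (s : Finset ι) (hp : p ≠ 0) {f : ι → _}
    (h : ∀ k ∈ s, Dom r S B p (f k)) : Dom r S B p (fun u x => ∑ k ∈ s, f k u x) := by
  classical
  induction s using Finset.induction_on with
  | empty => exact ⟨fun u _ => by simpa using continuousOn_const, 0, by simp, fun u _ => by simp [hp]⟩
  | insert a s ha ih =>
    simp_rw [Finset.sum_insert ha]
    exact (h a (by simp)).add (ih fun k hk => h k (by simp [hk]))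

lemma Dom.pow {k : ℕ} (h : Dom r S B (k * p) f) : Dom r S B p (fun u x => f u x ^ k) := by
  refine ⟨fun u hu => (h.1 u hu).pow k, ?_⟩
  obtain ⟨-, C, hC, hb⟩ := h
  refine ⟨C, hC, fun u hu => ?_⟩
  simp_rw [abs_pow, ← pow_mul]
  exact hb u hu

lemma Dom.abs (h : Dom r S B p f) : Dom r S B p (fun u x => |f u x|) :=
  h.le (fun u hu => (h.1 u hu).abs) zero_le_one (fun u _ x _ => by simp)

lemma comp_cont {u : (Fin 2 → ℝ) → (Fin m → ℝ)} (hu : Adm r α u) (l : ℕ) (I a) :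
    ContinuousOn (fun x => pdIter u l x I a) (Dr r) :=
  (contDiffOn_pi.1 (smooth_pdIter hu.1 l I) a).continuousOn

lemma QQ_cont {u : (Fin 2 → ℝ) → (Fin m → ℝ)} (hu : Adm r α u) (l : ℕ) :
    ContinuousOn (QQ u l) (Dr r) := by
  unfold QQ
  exact continuousOn_finsetSum _ fun I _ => continuousOn_finsetSum _ fun a _ =>
    (comp_cont hu l I a).abs

lemma RR_succ (N : ℕ) (u : (Fin 2 → ℝ) → (Fin m → ℝ)) (x : Fin 2 → ℝ) :
    RR (N+1) u x = RR N u x + QQ u (N+2) x := by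
  unfold RR QQ
  rw [Finset.sum_Icc_succ_top (by omega)]

lemma RR_cont {u : (Fin 2 → ℝ) → (Fin m → ℝ)} (hu : Adm r α u) (N : ℕ) :
    ContinuousOn (RR N u) (Dr r) := by
  unfold RR
  exact continuousOn_finsetSum _ fun j _ => QQ_cont hu (j+1)

lemma nCov2_cont {u : (Fin 2 → ℝ) → (Fin m → ℝ)} (hu : Adm r α u) (l : ℕ) :
    ContinuousOn (nCov2 (gr u) l) (Dr r) := ((wt_nCov2 l).smooth hu).continuousOn

lemma one_le_KK (hα : 0 ≤ α) {u : (Fin 2 → ℝ) → (Fin m → ℝ)} (hu : Adm r α u) (l : ℕ)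
    {x} (hx : x ∈ Dr r) : 1 ≤ KK u l x := by
  unfold KK
  rw [Real.one_le_sqrt]
  linarith [nCov2_nonneg hα l hu hx]

lemma KK_fin (hr : 0 < r) (hα : 0 ≤ α) {u : (Fin 2 → ℝ) → (Fin m → ℝ)} (hu : Adm r α u) (j : ℕ)
    (h : ∫⁻ x in Dr r, ENNReal.ofReal (nCov2 (gr u) (j+1) x) < ⊤) (n : ℕ) :
    ∫⁻ x in Dr r, ENNReal.ofReal (|KK u j x| ^ n) < ⊤ := by
  obtain ⟨C, hC, hb⟩ := KK_grad (m := m) (r := r) hα j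
  have hG : ∫⁻ x in Dr r, ENNReal.ofReal (Gd (KK u j) x ^ 2) < ⊤ := by
    refine lt_of_le_of_lt (lint_mono (g := fun x => C ^ 2 * nCov2 (gr u) (j+1) x) fun x hx => ?_) ?_
    · have h1 := pow_le_pow_left₀ (Gd_nonneg _ _) (hb u hu x hx) 2
      rw [mul_pow, Real.sq_sqrt (nCov2_nonneg hα _ hu hx)] at h1
      exact h1
    · rw [lint_const_mul (by positivity)]
      exact ENNReal.mul_lt_top ENNReal.ofReal_lt_top h
  refine lt_of_le_of_lt (lint_mono fun x hx => ?_)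
    (sob4 r hr (KK u j) ((KK_smooth hα hu j).of_le (by exact mod_cast le_top)) hG n)
  have := one_le_KK hα hu j hx
  exact pow_le_pow_right₀ (this.trans (le_abs_self _)) (by omega)

lemma KK_desc (hr : 0 < r) (hα : 0 ≤ α) {u : (Fin 2 → ℝ) → (Fin m → ℝ)} (hu : Adm r α u) (l : ℕ)
    (h : ∫⁻ x in Dr r, ENNReal.ofReal (nCov2 (gr u) l x) < ⊤) : ∀ j < l, ∀ n : ℕ,
    ∫⁻ x in Dr r, ENNReal.ofReal (|KK u j x| ^ n) < ⊤ := by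
  induction l with
  | zero => intro j hj; omega
  | succ l ih =>
    have h1 := KK_fin hr hα hu l h
    intro j hj
    rcases Nat.lt_succ_iff_lt_or_eq.1 hj with hj | rfl
    · refine ih ?_ j hj
      refine lt_of_le_of_lt (lint_mono fun x hx => ?_) (h1 2)
      have := nCov2_nonneg hα l hu hx
      unfold KK
      rw [sq_abs, Real.sq_sqrt (by positivity)]
      linarith
    · exact h1

lemma dom_single {u : (Fin 2 → ℝ) → (Fin m → ℝ)} (hc : ContinuousOn (f u) (Dr r))
    (h : ∫⁻ x in Dr r, ENNReal.ofReal (|f u x| ^ p) < ⊤) : Dom r {u} (fun _ => 1) p f :=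
  ⟨fun v hv => by rw [mem_singleton_iff.1 hv]; exact hc, _, h.ne, fun v hv => by
    rw [mem_singleton_iff.1 hv]; simp⟩

lemma bd_succ (l : ℕ) (R : ℝ) : bd (l+1) R = R + R ^ (l+1) := by simp [bd]

lemma RR_fin (hr : 0 < r) (hα : 0 ≤ α) {u : (Fin 2 → ℝ) → (Fin m → ℝ)} (hu : Adm r α u) (l : ℕ)
    (h : ∫⁻ x in Dr r, ENNReal.ofReal (nCov2 (gr u) l x) < ⊤) : ∀ N ≤ l, ∀ p : ℕ, p ≠ 0 →
    Dom r {u} (fun _ => 1) p (fun u x => RR N u x) := by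
  have hK := KK_desc hr hα hu l h
  intro N
  induction N with
  | zero =>
    intro _ p hp
    refine dom_single (RR_cont hu 0) ?_
    simp [RR, hp]
  | succ N ih =>
    intro hN p hp
    have ih' := ih (by omega)
    simp_rw [RR_succ]
    refine (ih' p hp).add ?_
    obtain ⟨C, hC, hb⟩ := QQ_upper (m := m) (r := r) hα N
    have d1 : Dom r {u} (fun _ => 1) p (fun u x => KK u N x) :=
      dom_single ((KK_smooth hα hu N).continuousOn) (hK N (by omega) p)
    have d2 : Dom r {u} (fun _ => 1) p (fun u x => RR N u x ^ (N+1)) :=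
      (ih' ((N+1) * p) (by positivity)).pow
    refine (d1.add ((ih' p hp).add d2)).le (fun v hv => ?_) hC (fun v hv x hx => ?_)
    · rw [mem_singleton_iff.1 hv]; exact QQ_cont hu _
    · rw [mem_singleton_iff.1 hv]
      have h1 := hb u hu x hx
      rw [bd_succ] at h1
      rw [abs_of_nonneg (QQ_nonneg _ _ _)]
      refine h1.trans (mul_le_mul_of_nonneg_left ?_ hC)
      refine le_trans ?_ (le_abs_self _)
      gcongr
      unfold KK
      exact Real.sqrt_le_sqrt (by linarith)

lemma QQ_fin (hr : 0 < r) (hα : 0 ≤ α) {u : (Fin 2 → ℝ) → (Fin m → ℝ)} (hu : Adm r α u) (l : ℕ)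
    (h : ∫⁻ x in Dr r, ENNReal.ofReal (nCov2 (gr u) l x) < ⊤) : ∀ i ≤ l,
    ∫⁻ x in Dr r, ENNReal.ofReal (QQ u (i+2) x ^ 2) < ⊤ := by
  have hR := RR_fin hr hα hu l h
  have fin : ∀ {f : ((Fin 2 → ℝ) → (Fin m → ℝ)) → (Fin 2 → ℝ) → ℝ},
      Dom r {u} (fun _ => 1) 2 f → ∫⁻ x in Dr r, ENNReal.ofReal (f u x ^ 2) < ⊤ := by
    rintro f ⟨-, C, hC, hb⟩
    have := hb u (mem_singleton _)
    simp only [sq_abs, mul_one] at this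
    exact lt_of_le_of_lt this hC.lt_top
  intro i hi
  rcases hi.lt_or_eq with hi | rfl
  · have h1 := fin (hR (i+1) (by omega) 2 two_ne_zero)
    refine lt_of_le_of_lt (lint_mono fun x hx => ?_) h1
    refine pow_le_pow_left₀ (QQ_nonneg _ _ _) ?_ 2
    rw [RR_succ]
    linarith [RR_nonneg i u x]
  · obtain ⟨C, hC, hb⟩ := QQ_upper (m := m) (r := r) hα i
    have d1 : Dom r {u} (fun _ => 1) 2 (fun u x => √(nCov2 (gr u) i x)) := by
      refine dom_single ((nCov2_cont hu i).sqrt) ?_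
      refine lt_of_le_of_lt (lint_mono fun x hx => ?_) h
      rw [sq_abs, Real.sq_sqrt (nCov2_nonneg hα _ hu hx)]
    have d2 : Dom r {u} (fun _ => 1) 2 (fun u x => RR i u x ^ (i+1)) :=
      (hR i le_rfl ((i+1) * 2) (by positivity)).pow
    refine fin (f := fun u => QQ u (i+2))
      ((d1.add ((hR i le_rfl 2 two_ne_zero).add d2)).le (fun v hv => ?_) hC (fun v hv x hx => ?_))
    · rw [mem_singleton_iff.1 hv]; exact QQ_cont hu _
    · rw [mem_singleton_iff.1 hv]
      have h1 := hb u hu x hx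
      rw [bd_succ] at h1
      rw [abs_of_nonneg (QQ_nonneg _ _ _)]
      exact h1.trans (mul_le_mul_of_nonneg_left (le_abs_self _) hC)

/-- squared Euclidean size of derivatives of order `i+2` -/
def sqd (u : (Fin 2 → ℝ) → (Fin m → ℝ)) (i : ℕ) (x : Fin 2 → ℝ) : ℝ :=
  ∑ I : Fin (i+2) → Fin 2, ∑ a, (pdIter u (i+2) x I a) ^ 2

lemma sqd_nonneg (u : (Fin 2 → ℝ) → (Fin m → ℝ)) (i : ℕ) (x : Fin 2 → ℝ) : 0 ≤ sqd u i x := by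
  unfold sqd; positivity

lemma sq_le_sqd (u : (Fin 2 → ℝ) → (Fin m → ℝ)) (i : ℕ) (x : Fin 2 → ℝ) (I a) :
    (pdIter u (i+2) x I a) ^ 2 ≤ sqd u i x := by
  unfold sqd
  refine le_trans ?_ (Finset.single_le_sum (f := fun I => ∑ A, (pdIter u (i+2) x I A) ^ 2)
      (fun j _ => by positivity) (Finset.mem_univ I))
  exact Finset.single_le_sum (f := fun A => (pdIter u (i+2) x I A) ^ 2)
    (fun j _ => by positivity) (Finset.mem_univ a)

lemma sqd_cont {u : (Fin 2 → ℝ) → (Fin m → ℝ)} (hu : Adm r α u) (l : ℕ) :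
    ContinuousOn (sqd u l) (Dr r) := by
  unfold sqd
  exact continuousOn_finsetSum _ fun I _ => continuousOn_finsetSum _ fun a _ =>
    (comp_cont hu _ I a).pow 2

lemma sqd_le_QQ (i : ℕ) : ∃ C : ℝ, 0 ≤ C ∧ ∀ (u : (Fin 2 → ℝ) → (Fin m → ℝ)) (x : Fin 2 → ℝ),
    sqd u i x ≤ C * QQ u (i+2) x ^ 2 := by
  refine ⟨∑ I : Fin (i+2) → Fin 2, ∑ a : Fin m, 1, by positivity, fun u x => ?_⟩
  unfold sqd
  rw [Finset.sum_mul]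
  refine Finset.sum_le_sum fun I _ => ?_
  rw [Finset.sum_mul]
  refine Finset.sum_le_sum fun a _ => ?_
  rw [one_mul, ← sq_abs]
  exact pow_le_pow_left₀ (abs_nonneg _) (abs_le_QQ u _ x I a) 2

/-- extended squared Sobolev norm -/
def WE (r : ℝ) (l : ℕ) (u : (Fin 2 → ℝ) → (Fin m → ℝ)) : ENNReal :=
  ∑ i ∈ Finset.range (l+1), ∫⁻ x in Dr r, ENNReal.ofReal (sqd u i x)

lemma le_WE {l i : ℕ} (hi : i ≤ l) (u : (Fin 2 → ℝ) → (Fin m → ℝ)) :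
    ∫⁻ x in Dr r, ENNReal.ofReal (sqd u i x) ≤ WE r l u :=
  Finset.single_le_sum (f := fun i => ∫⁻ x in Dr r, ENNReal.ofReal (sqd u i x))
    (fun _ _ => zero_le) (Finset.mem_range.2 (by omega))

lemma comp_dom (hr : 0 < r) (l j n : ℕ) (hj : j + 1 ≤ l) (I : Fin (j+2) → Fin 2) (a : Fin m) :
    ∃ C : ENNReal, C ≠ ⊤ ∧ ∀ u : (Fin 2 → ℝ) → (Fin m → ℝ), Adm r α u →
    ∫⁻ x in Dr r, ENNReal.ofReal (|pdIter u (j+2) x I a| ^ (2 * (n+1))) ≤ C * WE r l u ^ (n+1) := by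
  obtain ⟨C, hC, hs⟩ := sob3 r hr n
  refine ⟨C * (5:ENNReal) ^ (n+1), ENNReal.mul_ne_top hC.ne (by simp), fun u hu => ?_⟩
  have hsm := contDiffOn_pi.1 (smooth_pdIter hu.1 (j+2) I) a
  refine (hs _ (hsm.of_le (by exact mod_cast le_top))).trans ?_
  rw [mul_assoc, ← mul_pow]
  gcongr
  calc _ ≤ ∫⁻ x in Dr r, ENNReal.ofReal (sqd u j x + 4 * sqd u (j+1) x) := by
        refine lint_mono fun x hx => ?_
        have h1 := sq_le_sqd u j x I a
        rw [← sq_abs] at h1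
        refine add_le_add h1 ?_
        unfold Gd
        rw [dd_pdIter hu.1 _ _ _ _ hx, dd_pdIter hu.1 _ _ _ _ hx]
        have h2 := sq_le_sqd u (j+1) x (Fin.cons 0 I) a
        have h3 := sq_le_sqd u (j+1) x (Fin.cons 1 I) a
        rw [← sq_abs] at h2 h3
        have h4 := sq_nonneg (|pdIter u (j+1+2) x (Fin.cons 0 I) a| - |pdIter u (j+1+2) x (Fin.cons 1 I) a|)
        have e : j + 2 + 1 = j + 1 + 2 := by ring
        change (|pdIter u (j+1+2) x (Fin.cons 0 I) a| + |pdIter u (j+1+2) x (Fin.cons 1 I) a|) ^ 2 ≤ _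
        linarith
    _ ≤ WE r l u + 4 * WE r l u := by
        refine (lint_add_le (sqd_cont hu j)).trans ?_
        rw [lint_const_mul (by norm_num)]
        refine add_le_add (le_WE (by omega) u) ?_
        have : ENNReal.ofReal 4 = 4 := by simp
        rw [this]
        gcongr
        exact le_WE hj u
    _ = 5 * WE r l u := by ring

lemma main_dom (hr : 0 < r) (l : ℕ) : Dom r {u : (Fin 2 → ℝ) → (Fin m → ℝ) | Adm r α u}
    (fun u => WE r l u + WE r l u ^ (l+1)) 2
    (fun u x => QQ u (l+2) x + (RR l u x + RR l u x ^ (l+1))) := by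
  have hQ : Dom r {u : (Fin 2 → ℝ) → (Fin m → ℝ) | Adm r α u}
    (fun u => WE r l u + WE r l u ^ (l+1)) 2 (fun u x => QQ u (l+2) x) := by
    unfold QQ
    refine Dom.sum _ two_ne_zero fun I _ => Dom.sum _ two_ne_zero fun a _ => ?_
    refine Dom.abs ⟨fun u hu => comp_cont hu _ I a, 1, by simp, fun u hu => ?_⟩
    rw [one_mul]
    refine le_trans ?_ ((le_WE (le_refl l) u).trans (le_add_of_nonneg_right (zero_le)))
    refine lint_mono fun x hx => ?_
    rw [sq_abs]
    exact sq_le_sqd u l x I a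
  have hR : ∀ n, n = 0 ∨ n = l → Dom r {u : (Fin 2 → ℝ) → (Fin m → ℝ) | Adm r α u}
    (fun u => WE r l u + WE r l u ^ (l+1)) (2 * (n+1)) (fun u x => RR l u x) := by
    intro n hn
    unfold RR
    refine Dom.sum _ (by omega) fun j hj => Dom.sum _ (by omega) fun I _ =>
      Dom.sum _ (by omega) fun a _ => ?_
    rw [Finset.mem_Icc] at hj
    obtain ⟨j, rfl⟩ : ∃ j', j = j' + 1 := ⟨j - 1, by omega⟩
    obtain ⟨C, hC, hb⟩ := comp_dom (m := m) (α := α) hr l j n hj.2 I a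
    refine Dom.abs ⟨fun u hu => comp_cont hu _ I a, C, hC, fun u hu => (hb u hu).trans ?_⟩
    gcongr
    rcases hn with rfl | rfl
    · simp
    · exact le_add_of_nonneg_left (zero_le)
  refine hQ.add ((hR 0 (Or.inl rfl)).add (Dom.pow ?_))
  have := hR l (Or.inr rfl)
  rwa [mul_comm] at this

lemma main_est (hr : 0 < r) (hα : 0 ≤ α) (l : ℕ) : ∃ C : ENNReal, C ≠ ⊤ ∧
    ∀ u : (Fin 2 → ℝ) → (Fin m → ℝ), Adm r α u →
    ∫⁻ x in Dr r, ENNReal.ofReal (nCov2 (gr u) l x * √(gmet (gr u) x).det) ≤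
      C * (WE r l u + WE r l u ^ (l+1)) := by
  obtain ⟨-, C, hC, hb⟩ := main_dom (m := m) (α := α) hr l
  obtain ⟨C1, hC1, h1⟩ := nCov2_le (m := m) (r := r) hα l
  obtain ⟨C2, hC2, h2⟩ := SC_upper (m := m) (r := r) hα l
  obtain ⟨C3, hC3, h3⟩ := (wt_det (m := m) (r := r) (α := α)).bound hα
  refine ⟨ENNReal.ofReal (C1 * C2 ^ 2 * √C3) * C, ENNReal.mul_ne_top ENNReal.ofReal_ne_top hC,
    fun u hu => ?_⟩
  rw [mul_assoc]
  refine le_trans ?_ (mul_le_mul_right (hb u hu) _)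
  rw [← lint_const_mul (by positivity)]
  refine lint_mono fun x hx => ?_
  have h4 := h1 u hu x hx
  have h5 := h2 u hu x hx
  have h6 := h3 u hu x hx
  simp only [bd_succ] at h5
  simp only [bd, if_true, mul_one] at h6
  rw [sq_abs]
  have h7 := pow_le_pow_left₀ (SC_nonneg u l x) h5 2
  have h8 : √(gmet (gr u) x).det ≤ √C3 := Real.sqrt_le_sqrt ((le_abs_self _).trans h6)
  calc _ ≤ (C1 * SC u l x ^ 2) * √C3 :=
        mul_le_mul h4 h8 (Real.sqrt_nonneg _) (by positivity)
    _ ≤ (C1 * (C2 * (QQ u (l+2) x + (RR l u x + RR l u x ^ (l+1)))) ^ 2) * √C3 := by gcongr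
    _ = _ := by ring

lemma final_est (hr : 0 < r) (hα : 0 ≤ α) (l : ℕ) : ∃ C : ℝ, 0 ≤ C ∧
    ∀ u : (Fin 2 → ℝ) → (Fin m → ℝ), Adm r α u → ∀ k, l ≤ k →
    ∫ x in Dr r, nCov2 (gr u) l x * √(gmet (gr u) x).det ≤
      C * (Wnorm r k u ^ 2 + (Wnorm r k u ^ 2) ^ (l+1)) := by
  obtain ⟨C, hC, hb⟩ := main_est (m := m) hr hα l
  refine ⟨C.toReal, ENNReal.toReal_nonneg, fun u hu k hk => ?_⟩
  have hInn : ∀ i, 0 ≤ ∫ x in Dr r, sqd u i x := fun i => integral_nonneg fun x => sqd_nonneg u i x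
  have hW : Wnorm r k u ^ 2 = ∑ i ∈ Finset.range (k+1), ∫ x in Dr r, sqd u i x := by
    unfold Wnorm
    rw [Real.sq_sqrt]
    · rfl
    · exact Finset.sum_nonneg fun i _ => hInn i
  by_cases hint : Integrable (fun x => nCov2 (gr u) l x * √(gmet (gr u) x).det)
      (volume.restrict (Dr r))
  swap
  · rw [integral_undef hint]
    positivity
  have hnn : 0 ≤ᵐ[volume.restrict (Dr r)] fun x => nCov2 (gr u) l x * √(gmet (gr u) x).det := by
    filter_upwards [ae_restrict_mem (measSet_Dr r)] with x hx
    exact mul_nonneg (nCov2_nonneg hα l hu hx) (Real.sqrt_nonneg _)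
  have hfin : ∫⁻ x in Dr r, ENNReal.ofReal (nCov2 (gr u) l x) < ⊤ := by
    refine lt_of_le_of_lt (lint_mono fun x hx => ?_) hint.lintegral_lt_top
    have h1 : 1 ≤ √(gmet (gr u) x).det := by
      rw [Real.one_le_sqrt]; exact det_ge hu.1 hx
    exact le_mul_of_one_le_right (nCov2_nonneg hα l hu hx) h1
  have hQ := QQ_fin hr hα hu l hfin
  have hsq : ∀ i ≤ l, ∫⁻ x in Dr r, ENNReal.ofReal (sqd u i x) =
      ENNReal.ofReal (∫ x in Dr r, sqd u i x) := by
    intro i hi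
    obtain ⟨c, hc, hcb⟩ := sqd_le_QQ (m := m) i
    have h1 : ∫⁻ x in Dr r, ENNReal.ofReal (sqd u i x) < ⊤ := by
      refine lt_of_le_of_lt (lint_mono fun x _ => hcb u x) ?_
      rw [lint_const_mul hc]
      exact ENNReal.mul_lt_top ENNReal.ofReal_lt_top (hQ i hi)
    rw [ofReal_integral_eq_lintegral_ofReal]
    · refine ⟨((sqd_cont hu i).aestronglyMeasurable (measSet_Dr r)), ?_⟩
      rw [hasFiniteIntegral_iff_ofReal (Filter.Eventually.of_forall fun x => sqd_nonneg u i x)]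
      exact h1
    · exact Filter.Eventually.of_forall fun x => sqd_nonneg u i x
  have hWE : WE r l u ≤ ENNReal.ofReal (Wnorm r k u ^ 2) := by
    unfold WE
    rw [Finset.sum_congr rfl (fun i hi => hsq i (by rw [Finset.mem_range] at hi; omega)),
      ← ENNReal.ofReal_sum_of_nonneg (fun i _ => hInn i), hW]
    apply ENNReal.ofReal_le_ofReal
    exact Finset.sum_le_sum_of_subset_of_nonneg
      (Finset.range_subset_range.2 (by omega)) (fun i _ _ => hInn i)
  rw [integral_eq_lintegral_of_nonneg_ae hnn hint.1]
  set w := Wnorm r k u ^ 2 with hw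
  have hw0 : 0 ≤ w := sq_nonneg _
  have h9 : ∫⁻ x in Dr r, ENNReal.ofReal (nCov2 (gr u) l x * √(gmet (gr u) x).det) ≤
      C * ENNReal.ofReal (w + w ^ (l+1)) := by
    refine (hb u hu).trans ?_
    rw [ENNReal.ofReal_add hw0 (by positivity), ENNReal.ofReal_pow hw0]
    gcongr
  refine (ENNReal.toReal_mono (ENNReal.mul_ne_top hC ENNReal.ofReal_ne_top) h9).trans ?_
  rw [ENNReal.toReal_mul, ENNReal.toReal_ofReal (by positivity)]

lemma final_thm (m : ℕ) (r α : ℝ) (hr : 0 < r) (hα : 0 < α) (k : ℕ) :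
    ∃ C > (0:ℝ), ∀ u : (Fin 2 → ℝ) → (Fin m → ℝ),
      ContDiffOn ℝ (⊤ : ℕ∞) u (Dr r) →
      (∀ x ∈ Dr r, ∑ i, ∑ a, (fderiv ℝ u x (Pi.single i 1) a) ^ 2 ≤ α ^ 2) →
      HAnorm r k u ≤ C * ∑ s ∈ Finset.Icc 1 (k+1), Wnorm r k u ^ s := by
  choose c hc hb using fun l => final_est (m := m) hr hα.le l
  set K := ∑ l ∈ Finset.range (k+1), c l with hK
  have hK0 : 0 ≤ K := Finset.sum_nonneg fun l _ => hc l
  refine ⟨√(2 * K) + 1, by positivity, fun u hu1 hu2 => ?_⟩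
  have hu : Adm r α u := ⟨hu1, hu2⟩
  set W := Wnorm r k u with hW
  have hW0 : 0 ≤ W := Real.sqrt_nonneg _
  set Z := ∑ s ∈ Finset.Icc 1 (k+1), W ^ s with hZ
  have hZ0 : 0 ≤ Z := by positivity
  have hs : ∀ s, 1 ≤ s → s ≤ k+1 → W ^ s ≤ Z := fun s h1 h2 =>
    Finset.single_le_sum (f := fun s => W ^ s) (fun i _ => by positivity) (Finset.mem_Icc.2 ⟨h1, h2⟩)
  have h1 : HAnorm r k u ≤ √(2 * K) * Z := by
    unfold HAnorm
    apply Real.sqrt_le_iff.2 ⟨by positivity, ?_⟩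
    rw [mul_pow, Real.sq_sqrt (by positivity), hK, Finset.mul_sum, Finset.sum_mul]
    refine Finset.sum_le_sum fun l hl => ?_
    have hl' : l ≤ k := by rw [Finset.mem_range] at hl; omega
    refine (hb l u hu k hl').trans ?_
    have h2 := pow_le_pow_left₀ (by positivity) (hs 1 le_rfl (by omega)) 2
    have h3 := pow_le_pow_left₀ (by positivity) (hs (l+1) (by omega) (by omega)) 2
    rw [pow_one] at h2
    rw [← pow_mul, mul_comm] at h3
    rw [← hW, ← pow_mul]
    nlinarith [hc l, mul_le_mul_of_nonneg_left h2 (hc l), mul_le_mul_of_nonneg_left h3 (hc l)]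
  linarith

end Stmt17


open Stmt17 MeasureTheory in
/-- Lemma 4.4: for a graph over the disk `D_r` with `|Du| ≤ α`:
`‖A‖_{H^{k,2}} ≤ C Σ_{s=1}^{k+1} ‖D²u‖^s_{W^{k,2}}` with `C = C(r, α, k)`. -/
theorem stmt_17 (m : ℕ) (r α : ℝ) (hr : 0 < r) (hα : 0 < α) (k : ℕ) :
    ∃ C > (0:ℝ), ∀ u : (Fin 2 → ℝ) → (Fin m → ℝ),
      ContDiffOn ℝ (⊤ : ℕ∞) u (Dr r) →
      (∀ x ∈ Dr r, ∑ i, ∑ a, (fderiv ℝ u x (Pi.single i 1) a) ^ 2 ≤ α ^ 2) →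
      HAnorm r k u ≤ C * ∑ s ∈ Finset.Icc 1 (k+1), Wnorm r k u ^ s := by
  exact final_thm m r α hr hα k
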